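/- Let 𝒬 be the set of odd primes p such that the Diophantine equation 8x^2 + 27y^2 = jp has a primitive solution for some j ∈ {1, 4, 8}. For each k ∈ {1, 5, 7, 11}, let 𝒬ₖ = {p ∈ 𝒬 : p ≡ k (mod 24)}. Then for each k ∈ {1, 5, 7, 11}, the Dirichlet density of 𝒬ₖ equals 1/24; in particular, each 𝒬ₖ is infinite. -/

import Mathlib

open Filter Topology

/-- The set 𝒬 of odd primes `p` such that `8x² + 27y² = jp` has a primitive
solution for some `j ∈ {1, 4, 8}`. -/
def QSet : Set ℕ :=
  {p | p.Prime ∧ Odd p ∧ ∃ j ∈ ({1, 4, 8} : Set ℤ), ∃ x y : ℤ,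
    8 * x ^ 2 + 27 * y ^ 2 = j * p ∧ Int.gcd x y = 1}

/-- The subset of 𝒬 consisting of primes congruent to `k` modulo 24. -/
def QSetMod (k : ℕ) : Set ℕ := {p ∈ QSet | p % 24 = k}

lemma local_factor (c : ℕ → ℝ) (y : ℝ) (hy0 : 0 ≤ y) (hy : y ≤ 2/5) (h0 : c 0 = 1)
    (hc : ∀ k, |c k| ≤ y ^ k) :
    0 < ∑' k, c k ∧ |Real.log (∑' k, c k) - c 1| ≤ 10 * y ^ 2 := by
  have hy1 : y < 1 := by linarith
  have hg := summable_geometric_of_lt_one hy0 hy1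
  have hsum : Summable c := Summable.of_norm_bounded hg (by simpa using hc)
  have hs1 : Summable (fun k => c (k+1)) := (summable_nat_add_iff 1).2 hsum
  have hs2 : Summable (fun k => c (k+2)) := (summable_nat_add_iff 2).2 hsum
  have e1 : ∑' k, c k = 1 + ∑' k, c (k+1) := by rw [hsum.tsum_eq_zero_add, h0]
  have e2 : ∑' k, c (k+1) = c 1 + ∑' k, c (k+2) := by rw [hs1.tsum_eq_zero_add]
  have b1 : |∑' k, c (k+1)| ≤ y * (1-y)⁻¹ := by
    have : HasSum (fun k => y * y^k) (y * (1-y)⁻¹) :=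
      (hasSum_geometric_of_lt_one hy0 hy1).mul_left y
    rw [← Real.norm_eq_abs]
    exact tsum_of_norm_bounded this (fun k => by
      have := hc (k+1); rw [pow_succ'] at this; simpa using this)
  have b2 : |∑' k, c (k+2)| ≤ y^2 * (1-y)⁻¹ := by
    have : HasSum (fun k => y^2 * y^k) (y^2 * (1-y)⁻¹) :=
      (hasSum_geometric_of_lt_one hy0 hy1).mul_left (y^2)
    rw [← Real.norm_eq_abs]
    exact tsum_of_norm_bounded this (fun k => by
      have := hc (k+2); rw [pow_add, mul_comm] at this; simpa using this)
  have hi : (1-y)⁻¹ ≤ 5/3 := by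
    rw [inv_le_comm₀ (by linarith) (by norm_num)]; linarith
  set u := ∑' k, c (k+1) with hu
  have bu : |u| ≤ 5/3 * y := by nlinarith
  have bu' : |u| ≤ 2/3 := by linarith
  have b3 : |u - c 1| ≤ 5/3 * y^2 := by
    rw [e2, add_sub_cancel_left]; nlinarith [sq_nonneg y]
  have hlog := Real.abs_log_sub_add_sum_range_le (x := -u) (by rw [abs_neg]; linarith) 1
  simp only [Finset.sum_range_one, abs_neg, sub_neg_eq_add] at hlog
  norm_num at hlog
  have h4 : |u|^2 / (1-|u|) ≤ 25/3 * y^2 := by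
    rw [div_le_iff₀ (by linarith)]
    have : |u|^2 ≤ (5/3*y)^2 := by gcongr
    nlinarith [sq_nonneg y]
  rw [sq_abs] at h4
  rw [e1]
  constructor
  · have := neg_abs_le u; linarith
  · calc _ = |(-u + Real.log (1+u)) + (u - c 1)| := by congr 1; ring
      _ ≤ _ := abs_add_le _ _
      _ ≤ _ := by linarith

noncomputable def Ls (a : ℕ → ℝ) (s : ℝ) : ℝ := ∑' n : ℕ, a n * (n : ℝ) ^ (-s)
noncomputable def Ps (a : ℕ → ℝ) (s : ℝ) : ℝ := ∑' p : Nat.Primes, a p * ((p : ℕ) : ℝ) ^ (-s)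

lemma primes_sum {s : ℝ} (hs : 1 < s) : Summable (fun p : Nat.Primes => ((p : ℕ) : ℝ) ^ (-s)) :=
  Nat.Primes.summable_rpow.2 (by linarith)

theorem euler_log : ∃ K : ℝ, ∀ (a : ℕ → ℝ) (_ : a 0 = 0) (_ : a 1 = 1)
    (_ : ∀ m n, Nat.Coprime m n → a (m * n) = a m * a n)
    (_ : ∀ p k, p.Prime → |a (p ^ k)| ≤ 2 ^ k)
    (_ : ∀ p k, p.Prime → 1 ≤ k → p < 5 → a (p ^ k) = 0)
    (s : ℝ) (_ : 1 < s) (_ : Summable (fun n : ℕ => |a n| * (n : ℝ) ^ (-s))),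
    0 < Ls a s ∧ |Real.log (Ls a s) - Ps a s| ≤ K := by
  refine ⟨∑' p : Nat.Primes, 40 * ((p : ℕ) : ℝ) ^ (-(2:ℝ)), ?_⟩
  intro a h0 h1 hmul hb h5 s hs hsum
  set f : ℕ → ℝ := fun n => a n * (n : ℝ) ^ (-s) with hf
  have hprod := EulerProduct.eulerProduct_hasProd (f := f) (by simp [hf, h1])
    (fun {m n} hmn => by
      simp only [hf, hmul m n hmn, Nat.cast_mul]
      rw [Real.mul_rpow (by positivity) (by positivity)]; ring)
    (by
      refine hsum.congr (fun n => ?_)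
      simp only [hf, norm_mul, Real.norm_eq_abs]
      rw [abs_of_nonneg (Real.rpow_nonneg (Nat.cast_nonneg n) _)])
    (by simp [hf, h0])
  have key : ∀ p : Nat.Primes, 0 < ∑' e, f (p ^ e) ∧
      |Real.log (∑' e, f (p ^ e)) - f p| ≤ 40 * ((p : ℕ) : ℝ) ^ (-(2:ℝ)) := by
    intro p
    have hp0 : (1 : ℝ) ≤ (p : ℕ) := by exact_mod_cast p.2.one_lt.le
    have hpp : (0:ℝ) < (p : ℕ) := by linarith
    by_cases hp : 5 ≤ (p : ℕ)
    · have hx : ((p : ℕ) : ℝ) ^ (-s) ≤ ((p : ℕ) : ℝ) ^ (-(1:ℝ)) :=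
        Real.rpow_le_rpow_of_exponent_le hp0 (by linarith)
      have hx2 : ((p : ℕ) : ℝ) ^ (-(1:ℝ)) ≤ 1/5 := by
        rw [Real.rpow_neg_one, inv_le_comm₀ hpp (by norm_num)]
        norm_num; exact_mod_cast hp
      have hx0 : 0 ≤ ((p : ℕ) : ℝ) ^ (-s) := Real.rpow_nonneg hpp.le _
      have := local_factor (fun e => f (p ^ e)) (2 * ((p : ℕ) : ℝ) ^ (-s)) (by positivity)
        (by linarith) (by simp [hf, h1]) (fun k => by
          simp only [hf, abs_mul, Nat.cast_pow, mul_pow]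
          rw [abs_of_nonneg (Real.rpow_nonneg (by positivity) _)]
          have e : (((p : ℕ) : ℝ) ^ k) ^ (-s) = (((p : ℕ) : ℝ) ^ (-s)) ^ k := by
            rw [← Real.rpow_natCast, ← Real.rpow_natCast, ← Real.rpow_mul hpp.le,
              ← Real.rpow_mul hpp.le]; ring_nf
          rw [e]
          exact mul_le_mul_of_nonneg_right (hb _ k p.2) (by positivity))
      refine ⟨this.1, ?_⟩
      have h2 := this.2
      simp only [pow_one] at h2
      refine h2.trans ?_
      have : (((p : ℕ) : ℝ) ^ (-s))^2 ≤ ((p : ℕ) : ℝ) ^ (-(2:ℝ)) := by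
        rw [← Real.rpow_natCast, ← Real.rpow_mul hpp.le]
        exact Real.rpow_le_rpow_of_exponent_le hp0 (by push_cast; linarith)
      rw [mul_pow]; linarith
    · push Not at hp
      have hz : ∀ e, e ≠ 0 → f (p ^ e) = 0 := fun e he => by
        simp [hf, h5 p e p.2 (Nat.one_le_iff_ne_zero.2 he) hp]
      rw [tsum_eq_single 0 hz]
      have := hz 1 one_ne_zero
      rw [pow_one] at this
      rw [this]
      simp only [pow_zero]
      have e : f 1 = 1 := by simp [hf, h1]
      rw [e]; simp
  have hK : Summable (fun p : Nat.Primes => 40 * ((p : ℕ) : ℝ) ^ (-(2:ℝ))) :=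
    (primes_sum (by norm_num)).mul_left _
  have hfp : Summable (fun p : Nat.Primes => f p) := by
    have : Summable f := Summable.of_norm (hsum.congr (fun n => by
      simp only [hf, norm_mul, Real.norm_eq_abs]
      rw [abs_of_nonneg (Real.rpow_nonneg (Nat.cast_nonneg n) _)]))
    exact this.comp_injective Subtype.val_injective
  have hd : Summable (fun p : Nat.Primes => Real.log (∑' e, f (p ^ e)) - f p) :=
    Summable.of_norm_bounded hK (fun p => (key p).2)
  have hl : Summable (fun p : Nat.Primes => Real.log (∑' e, f (p ^ e))) := by
    simpa using hd.add hfp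
  have hexp := hl.hasSum.rexp
  have hexp2 : HasProd (fun p : Nat.Primes => ∑' e, f (p ^ e))
      (Real.exp (∑' p : Nat.Primes, Real.log (∑' e, f (p ^ e)))) := by
    convert hexp using 2 with p
    simp [Real.exp_log (key p).1]
  have hL : Ls a s = Real.exp (∑' p : Nat.Primes, Real.log (∑' e, f (p ^ e))) :=
    hprod.unique hexp2
  rw [hL]
  refine ⟨Real.exp_pos _, ?_⟩
  rw [Real.log_exp]
  have : Ps a s = ∑' p : Nat.Primes, f p := rfl
  rw [this, ← hl.tsum_sub hfp]
  rw [← Real.norm_eq_abs]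
  exact tsum_of_norm_bounded hK.hasSum (fun p => (key p).2)

lemma Ls_eq_integral (a : ℕ → ℝ) (C : ℝ) (h0 : a 0 = 0)
    (hA : ∀ N : ℕ, |∑ n ∈ Finset.Icc 1 N, a n| ≤ C * (N : ℝ) ^ (1/2 : ℝ))
    (s : ℝ) (hs : 1 < s) (hsum : Summable (fun n : ℕ => |a n| * (n : ℝ) ^ (-s))) :
    Ls a s = s * ∫ t in Set.Ioi (1:ℝ), (∑ n ∈ Finset.Icc 1 ⌊t⌋₊, a n) * t ^ (-(s+1)) := by
  have hterm : ∀ n, LSeries.term (fun n => (a n : ℂ)) s n = ((a n * (n : ℝ) ^ (-s) : ℝ) : ℂ) := by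
    intro n
    rcases eq_or_ne n 0 with rfl | hn
    · simp [h0]
    · rw [LSeries.term_of_ne_zero hn]
      push_cast
      rw [Complex.ofReal_cpow (by positivity)]
      push_cast
      rw [Complex.cpow_neg]; rfl
  have hS : LSeriesSummable (fun n => (a n : ℂ)) s := by
    unfold LSeriesSummable
    rw [show LSeries.term (fun n => (a n : ℂ)) s = fun n => ((a n * (n : ℝ) ^ (-s) : ℝ) : ℂ)
      from funext hterm]
    rw [Complex.summable_ofReal]
    exact Summable.of_norm (hsum.congr (fun n => by
      simp only [norm_mul, Real.norm_eq_abs]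
      rw [abs_of_nonneg (Real.rpow_nonneg (Nat.cast_nonneg n) _)]))
  have := LSeries_eq_mul_integral (fun n => (a n : ℂ)) (r := 1/2) (by norm_num) (s := s)
    (by simp; linarith) hS (by
      refine Asymptotics.IsBigO.of_bound C (Eventually.of_forall fun N => ?_)
      rw [← Complex.ofReal_sum, Complex.norm_real, Real.norm_eq_abs, Real.norm_eq_abs,
        abs_of_nonneg (Real.rpow_nonneg (Nat.cast_nonneg N) _)]
      exact hA N)
  apply Complex.ofReal_injective
  have e1 : ((Ls a s : ℝ) : ℂ) = LSeries (fun n => (a n : ℂ)) s := by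
    unfold Ls LSeries
    rw [Complex.ofReal_tsum]
    exact tsum_congr fun n => (hterm n).symm
  rw [e1, this]
  push_cast
  congr 1
  rw [← integral_complex_ofReal]
  refine MeasureTheory.setIntegral_congr_fun measurableSet_Ioi (fun t ht => ?_)
  push_cast
  rw [Complex.ofReal_cpow (by have : (1:ℝ) < t := ht; linarith)]
  push_cast
  rfl

theorem lip (a : ℕ → ℝ) (C : ℝ) (h0 : a 0 = 0)
    (hA : ∀ N : ℕ, |∑ n ∈ Finset.Icc 1 N, a n| ≤ C * (N : ℝ) ^ (1/2 : ℝ))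
    (hsum : ∀ s : ℝ, 1 < s → Summable (fun n : ℕ => |a n| * (n : ℝ) ^ (-s))) :
    ∃ l K : ℝ, ∀ s : ℝ, 1 < s → s ≤ 2 → |Ls a s - l| ≤ K * (s - 1) := by
  have hC : 0 ≤ C := by simpa using (abs_nonneg _).trans (hA 1)
  set A : ℝ → ℝ := fun t => ∑ n ∈ Finset.Icc 1 ⌊t⌋₊, a n with hAdef
  set G : ℝ → ℝ := fun s => ∫ t in Set.Ioi (1:ℝ), A t * t ^ (-(s+1)) with hG
  have hAm : Measurable A :=
    (measurable_from_nat (f := fun N => ∑ n ∈ Finset.Icc 1 N, a n)).comp Nat.measurable_floor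
  have hAb : ∀ t : ℝ, 1 < t → |A t| ≤ C * t ^ (1/2:ℝ) := fun t ht =>
    (hA _).trans (mul_le_mul_of_nonneg_left
      (Real.rpow_le_rpow (by positivity) (Nat.floor_le (by linarith)) (by norm_num)) hC)
  have hpt : ∀ s : ℝ, ∀ t : ℝ, 1 < t → |A t * t ^ (-(s+1))| ≤ C * t ^ (-(s+1/2)) := by
    intro s t ht
    have ht0 : 0 < t := by linarith
    rw [abs_mul, abs_of_nonneg (Real.rpow_nonneg ht0.le (-(s+1)))]
    calc _ ≤ C * t ^ (1/2:ℝ) * t ^ (-(s+1)) :=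
          mul_le_mul_of_nonneg_right (hAb t ht) (Real.rpow_nonneg ht0.le _)
      _ = _ := by rw [mul_assoc, ← Real.rpow_add ht0]; congr 2; ring
  have hint0 : ∀ s : ℝ, 1 ≤ s → MeasureTheory.IntegrableOn (fun t : ℝ => C * t ^ (-(s+1/2)))
      (Set.Ioi 1) := fun s hs =>
    (integrableOn_Ioi_rpow_of_lt (by linarith) one_pos).const_mul C
  have hval : ∀ s : ℝ, 1 ≤ s → ∫ t in Set.Ioi (1:ℝ), C * t ^ (-(s+1/2)) = C / (s - 1/2) := by
    intro s hs
    rw [MeasureTheory.integral_const_mul, integral_Ioi_rpow_of_lt (by linarith) one_pos]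
    have : s - 1/2 ≠ 0 := by linarith
    have h2 : -(s+1/2)+1 ≠ 0 := by linarith
    rw [Real.one_rpow]
    have : -(s+1/2)+1 = -(s-1/2) := by ring
    rw [this]; rw [neg_div_neg_eq]; ring
  have hintg : ∀ s : ℝ, 1 ≤ s → MeasureTheory.IntegrableOn (fun t : ℝ => A t * t ^ (-(s+1)))
      (Set.Ioi 1) := fun s hs => by
    refine MeasureTheory.Integrable.mono' (hint0 s hs) ?_ ?_
    · exact (hAm.mul (measurable_id.pow_const _)).aestronglyMeasurable
    · filter_upwards [MeasureTheory.ae_restrict_mem measurableSet_Ioi] with t ht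
      exact hpt s t ht
  have hGb : ∀ s : ℝ, 1 ≤ s → |G s| ≤ 2 * C := by
    intro s hs
    have := MeasureTheory.norm_integral_le_of_norm_le (hint0 s hs) (f := fun t : ℝ => A t * t ^ (-(s+1)))
      (by
        filter_upwards [MeasureTheory.ae_restrict_mem measurableSet_Ioi] with t ht
        exact hpt s t ht)
    rw [hval s hs] at this
    refine this.trans ?_
    rw [div_le_iff₀ (by linarith)]; nlinarith
  have hGd : ∀ s : ℝ, 1 ≤ s → |G s - G 1| ≤ 4 * C * (s - 1) := by
    intro s hs
    have e : G s - G 1 = ∫ t in Set.Ioi (1:ℝ), (A t * t ^ (-(s+1)) - A t * t ^ (-((1:ℝ)+1))) :=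
      (MeasureTheory.integral_sub (hintg s hs) (hintg 1 le_rfl)).symm
    have := MeasureTheory.norm_integral_le_of_norm_le (μ := MeasureTheory.volume.restrict (Set.Ioi (1:ℝ)))
      (f := fun t : ℝ => A t * t ^ (-(s+1)) - A t * t ^ (-((1:ℝ)+1)))
      ((hint0 1 le_rfl).sub (hint0 s hs))
      (by
        filter_upwards [MeasureTheory.ae_restrict_mem measurableSet_Ioi] with t ht
        have ht1 : 1 < t := ht
        have ht0 : 0 < t := by linarith
        have hle : t ^ (-(s+1)) ≤ t ^ (-((1:ℝ)+1)) :=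
          Real.rpow_le_rpow_of_exponent_le ht1.le (by linarith)
        rw [← mul_sub, Real.norm_eq_abs, abs_mul, abs_sub_comm, abs_of_nonneg (sub_nonneg.2 hle)]
        calc _ ≤ C * t ^ (1/2:ℝ) * (t ^ (-((1:ℝ)+1)) - t ^ (-(s+1))) :=
              mul_le_mul_of_nonneg_right (hAb t ht) (sub_nonneg.2 hle)
          _ = C * (t ^ (1/2:ℝ) * t ^ (-((1:ℝ)+1))) - C * (t ^ (1/2:ℝ) * t ^ (-(s+1))) := by ring
          _ = _ := by
            rw [← Real.rpow_add ht0, ← Real.rpow_add ht0]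
            simp only [Pi.sub_apply]
            congr 3 <;> ring)
    rw [e]
    refine this.trans ?_
    have e3 : ∫ t in Set.Ioi (1:ℝ), ((fun t : ℝ => C * t ^ (-((1:ℝ)+1/2))) - fun t => C * t ^ (-(s+1/2))) t
        = C / (1 - 1/2) - C / (s - 1/2) := by
      rw [← hval 1 le_rfl, ← hval s hs]
      exact MeasureTheory.integral_sub (hint0 1 le_rfl) (hint0 s hs)
    rw [e3]
    have hp : 0 < s - 1/2 := by linarith
    have : C / (1 - 1/2) - C / (s - 1/2) = 2 * C * (s-1) / (s-1/2) := by
      have e5 : (1 - 1/2 : ℝ) = 1/2 := by norm_num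
      rw [e5, div_sub_div _ _ (by norm_num) hp.ne', div_eq_div_iff (by positivity) hp.ne']; ring
    rw [this, div_le_iff₀ hp]
    nlinarith [mul_nonneg hC (sub_nonneg.2 hs), mul_nonneg (mul_nonneg hC (sub_nonneg.2 hs)) (sub_nonneg.2 hs)]
  refine ⟨G 1, 6 * C, fun s hs hs2 => ?_⟩
  rw [Ls_eq_integral a C h0 hA s hs (hsum s hs)]
  change |s * G s - G 1| ≤ _
  calc |s * G s - G 1| = |(s-1) * G s + (G s - G 1)| := by congr 1; ring
    _ ≤ |(s-1) * G s| + |G s - G 1| := abs_add_le _ _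
    _ ≤ (s-1) * (2*C) + 4 * C * (s-1) := by
      rw [abs_mul, abs_of_nonneg (sub_nonneg.2 hs.le)]
      exact add_le_add (mul_le_mul_of_nonneg_left (hGb s hs.le) (sub_nonneg.2 hs.le)) (hGd s hs.le)
    _ = _ := by ring

/-- bounded as `s → 1+` -/
def Bd (f : ℝ → ℝ) : Prop := f =O[𝓝[>] (1:ℝ)] (fun _ => (1:ℝ))

lemma Bd.add {f g : ℝ → ℝ} (hf : Bd f) (hg : Bd g) : Bd (fun s => f s + g s) :=
  Asymptotics.IsBigO.add hf hg
lemma Bd.sub {f g : ℝ → ℝ} (hf : Bd f) (hg : Bd g) : Bd (fun s => f s - g s) :=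
  Asymptotics.IsBigO.sub hf hg
lemma Bd.cmul {f : ℝ → ℝ} (c : ℝ) (hf : Bd f) : Bd (fun s => c * f s) :=
  Asymptotics.IsBigO.const_mul_left hf c
lemma Bd.congr {f g : ℝ → ℝ} (hf : Bd f) (h : ∀ s, 1 < s → f s = g s) : Bd g :=
  Asymptotics.IsBigO.congr' hf (by
    filter_upwards [self_mem_nhdsWithin] with s hs using h s hs) EventuallyEq.rfl
lemma Bd.of_le {f : ℝ → ℝ} (C : ℝ) (h : ∀ s, 1 < s → |f s| ≤ C) : Bd f :=
  Asymptotics.IsBigO.of_bound C (by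
    filter_upwards [self_mem_nhdsWithin] with s hs
    simpa using h s hs)
lemma Bd.sum {ι : Type*} (t : Finset ι) {f : ι → ℝ → ℝ} (h : ∀ i ∈ t, Bd (f i)) :
    Bd (fun s => ∑ i ∈ t, f i s) := by
  have := Asymptotics.IsBigO.sum h
  have e : (∑ i ∈ t, f i) = fun s => ∑ i ∈ t, f i s := by ext s; simp
  rw [e] at this
  exact this
lemma Bd.of_tendsto {f : ℝ → ℝ} {l : ℝ} (h : Tendsto f (𝓝[>] 1) (𝓝 l)) : Bd f :=
  h.isBigO_one ℝ

noncomputable def ac (ψ : DirichletCharacter ℂ 24) (n : ℕ) : ℝ := (ψ (n : ZMod 24)).re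

lemma psi_cases (ψ : DirichletCharacter ℂ 24) (x : ZMod 24) :
    (ψ x = 0 ∧ ¬ IsUnit x) ∨ ψ x = 1 ∨ ψ x = -1 := by
  by_cases hx : IsUnit x
  · right
    have h2 : x * x = 1 := by
      have : ∀ u : (ZMod 24)ˣ, (u : ZMod 24) * u = 1 := by decide
      obtain ⟨u, rfl⟩ := hx
      exact this u
    have : ψ x * ψ x = 1 := by rw [← map_mul, h2, map_one]
    exact mul_self_eq_one_iff.1 this
  · left; exact ⟨MulChar.map_nonunit _ hx, hx⟩

lemma psi_real (ψ : DirichletCharacter ℂ 24) (x : ZMod 24) : (((ψ x).re : ℝ) : ℂ) = ψ x := by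
  rcases psi_cases ψ x with h | h | h <;> simp [h]

lemma psi_re_le (ψ : DirichletCharacter ℂ 24) (x : ZMod 24) : |(ψ x).re| ≤ 1 := by
  rcases psi_cases ψ x with h | h | h <;> simp [h]

lemma ac_mul (ψ : DirichletCharacter ℂ 24) (m n : ℕ) : ac ψ (m * n) = ac ψ m * ac ψ n := by
  apply Complex.ofReal_injective
  push_cast
  simp only [ac, psi_real]
  rw [Nat.cast_mul, map_mul]

lemma ac_summable (ψ : DirichletCharacter ℂ 24) (s : ℝ) (hs : 1 < s) :
    Summable (fun n : ℕ => |ac ψ n| * (n : ℝ) ^ (-s)) := by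
  refine Summable.of_nonneg_of_le (fun n => by positivity) (fun n => ?_)
    (Real.summable_nat_rpow.2 (by linarith : -s < -1))
  exact mul_le_of_le_one_left (by positivity) (psi_re_le _ _)

lemma ac_one (ψ : DirichletCharacter ℂ 24) : ac ψ 1 = 1 := by simp [ac]
lemma ac_zero (ψ : DirichletCharacter ℂ 24) : ac ψ 0 = 0 := by
  simp only [ac, Nat.cast_zero]
  rw [MulChar.map_nonunit _ (by decide)]; simp

lemma Ls_ac (ψ : DirichletCharacter ℂ 24) (s : ℝ) (hs : 1 < s) :
    ((Ls (ac ψ) s : ℝ) : ℂ) = ψ.LFunction s := by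
  rw [ψ.LFunction_eq_LSeries (by simpa using hs)]
  unfold Ls LSeries
  rw [Complex.ofReal_tsum]
  refine tsum_congr fun n => ?_
  rcases eq_or_ne n 0 with rfl | hn
  · simp [ac_zero]
  · rw [LSeries.term_of_ne_zero hn]
    push_cast
    rw [Complex.ofReal_cpow (by positivity)]
    push_cast
    rw [Complex.cpow_neg, ac, psi_real]; rfl

lemma ac_pow (ψ : DirichletCharacter ℂ 24) (p k : ℕ) : ac ψ (p ^ k) = ac ψ p ^ k := by
  induction k with
  | zero => simp [ac_one]
  | succ k ih => rw [pow_succ, ac_mul, ih, pow_succ]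

lemma prime_lt_five {p : ℕ} (hp : p.Prime) (h : p < 5) : p = 2 ∨ p = 3 := by
  interval_cases p <;> revert hp <;> decide

lemma ac_small (ψ : DirichletCharacter ℂ 24) {p : ℕ} (hp : p.Prime) (h : p < 5) : ac ψ p = 0 := by
  rcases prime_lt_five hp h with rfl | rfl <;> simp only [ac] <;>
  rw [MulChar.map_nonunit _ (by decide)] <;> simp

lemma log_ac : ∃ K : ℝ, ∀ (ψ : DirichletCharacter ℂ 24) (s : ℝ), 1 < s →
    0 < Ls (ac ψ) s ∧ |Real.log (Ls (ac ψ) s) - Ps (ac ψ) s| ≤ K := by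
  obtain ⟨K, hK⟩ := euler_log
  refine ⟨K, fun ψ s hs => hK (ac ψ) (ac_zero ψ) (ac_one ψ) (fun m n _ => ac_mul ψ m n)
    (fun p k _ => ?_) (fun p k hp hk h5 => ?_) s hs (ac_summable ψ s hs)⟩
  · rw [ac_pow, abs_pow]
    exact pow_le_pow_left₀ (abs_nonneg _) ((psi_re_le _ _).trans (by norm_num)) k
  · rw [ac_pow, ac_small ψ hp h5, zero_pow (by omega)]

lemma tend_ofReal : Tendsto (fun s : ℝ => (s : ℂ)) (𝓝[>] 1) (𝓝[≠] 1) := by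
  refine tendsto_nhdsWithin_iff.2 ⟨?_, ?_⟩
  · have : Tendsto (fun s : ℝ => (s : ℂ)) (𝓝 1) (𝓝 ((1:ℝ):ℂ)) :=
      Complex.continuous_ofReal.tendsto 1
    rw [Complex.ofReal_one] at this
    exact this.mono_left nhdsWithin_le_nhds
  · filter_upwards [self_mem_nhdsWithin] with s hs
    have : (1:ℝ) < s := hs
    simp only [Set.mem_compl_iff, Set.mem_singleton_iff]
    intro h
    have : s = 1 := by exact_mod_cast h
    linarith

lemma Ps_ac_ne (ψ : DirichletCharacter ℂ 24) (hψ : ψ ≠ 1) : Bd (Ps (ac ψ)) := by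
  obtain ⟨K, hK⟩ := log_ac
  have h1 : Bd (fun s => Real.log (Ls (ac ψ) s) - Ps (ac ψ) s) := Bd.of_le K fun s hs => (hK ψ s hs).2
  have hne := DirichletCharacter.LFunction_apply_one_ne_zero hψ
  have hc : Tendsto (fun s : ℝ => ψ.LFunction s) (𝓝[>] 1) (𝓝 (ψ.LFunction 1)) :=
    ((DirichletCharacter.differentiable_LFunction hψ).continuous.tendsto 1).comp
      (tend_ofReal.mono_right nhdsWithin_le_nhds)
  have hl := (hc.norm).log (norm_ne_zero_iff.2 hne)
  have h2 : Bd (fun s : ℝ => Real.log ‖ψ.LFunction s‖) := Bd.of_tendsto hl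
  refine (h2.sub h1).congr fun s hs => ?_
  rw [← Ls_ac ψ s hs, Complex.norm_real, Real.norm_eq_abs, Real.log_abs]
  ring

lemma Ps_ac_one : Bd (fun s => Ps (ac 1) s + Real.log (s - 1)) := by
  obtain ⟨K, hK⟩ := log_ac
  have h1 : Bd (fun s => Real.log (Ls (ac 1) s) - Ps (ac 1) s) := Bd.of_le K fun s hs => (hK 1 s hs).2
  have hc := (DirichletCharacter.LFunctionTrivChar_residue_one (N := 24)).comp tend_ofReal
  have hne : ∏ p ∈ (24:ℕ).primeFactors, (1 - (p : ℂ)⁻¹) ≠ 0 := by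
    refine Finset.prod_ne_zero_iff.mpr fun p hp ↦ ?_
    simpa [sub_ne_zero] using (Nat.prime_of_mem_primeFactors hp).ne_one
  have hl := (hc.norm).log (norm_ne_zero_iff.2 hne)
  have h2 := Bd.of_tendsto hl
  refine (h2.sub h1).congr fun s hs => ?_
  simp only [Function.comp]
  have e := Ls_ac 1 s hs
  change _ = DirichletCharacter.LFunctionTrivChar 24 s at e
  rw [← e, norm_mul, Complex.norm_real, Real.norm_eq_abs]
  have e2 : ‖(s:ℂ) - 1‖ = s - 1 := by
    rw [← Complex.ofReal_one, ← Complex.ofReal_sub, Complex.norm_real, Real.norm_eq_abs,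
      abs_of_pos (by linarith)]
  have hp := (hK 1 s hs).1
  rw [e2, Real.log_mul (by linarith) (by simpa using hp.ne'), Real.log_abs]
  ring

lemma Ps_bdd_summable {a : ℕ → ℝ} {C : ℝ} (ha : ∀ p, |a p| ≤ C) {s : ℝ} (hs : 1 < s) :
    Summable (fun p : Nat.Primes => a p * ((p : ℕ) : ℝ) ^ (-s)) := by
  refine Summable.of_norm_bounded ((primes_sum hs).mul_left C) fun p => ?_
  rw [norm_mul, Real.norm_eq_abs, Real.norm_eq_abs,
    abs_of_nonneg (Real.rpow_nonneg (Nat.cast_nonneg _) _)]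
  exact mul_le_mul_of_nonneg_right (ha _) (by positivity)

/-- the sum over primes in a residue class -/
noncomputable def Sk (k : ℕ) (s : ℝ) : ℝ := Ps (fun n => if n % 24 = k then 1 else 0) s

theorem Sk_asymp (k : ℕ) (hk : k < 24) (hu : IsUnit (k : ZMod 24)) :
    Bd (fun s => Sk k s + 1/8 * Real.log (s - 1)) := by
  have horth : ∀ n : ℕ, ∑ ψ : DirichletCharacter ℂ 24, (ψ ((k : ZMod 24)⁻¹)).re * ac ψ n
      = if n % 24 = k then 8 else 0 := by
    intro n
    have := DirichletCharacter.sum_char_inv_mul_char_eq ℂ hu (n : ZMod 24)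
    have e : (24 : ℕ).totient = 8 := by decide
    rw [e] at this
    apply Complex.ofReal_injective
    push_cast
    simp only [ac, psi_real]
    rw [this]
    have : ((k : ZMod 24) = (n : ZMod 24)) ↔ n % 24 = k := by
      rw [ZMod.natCast_eq_natCast_iff, Nat.ModEq, Nat.mod_eq_of_lt hk]; exact eq_comm
    simp only [this]
    split_ifs <;> simp
  have hS : ∀ s, 1 < s → Sk k s = 1/8 * ∑ ψ : DirichletCharacter ℂ 24,
      (ψ ((k : ZMod 24)⁻¹)).re * Ps (ac ψ) s := by
    intro s hs
    unfold Sk Ps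
    simp_rw [← tsum_mul_left]
    rw [← Summable.tsum_finsetSum, ← tsum_mul_left]
    · refine tsum_congr fun p => ?_
      simp_rw [← mul_assoc]
      rw [← Finset.sum_mul, horth]
      split_ifs <;> ring
    · intro ψ _
      exact (Ps_bdd_summable (fun p => psi_re_le ψ _) hs).mul_left _
  have h1 : Bd (fun s => ∑ ψ : DirichletCharacter ℂ 24,
      (ψ ((k : ZMod 24)⁻¹)).re * (Ps (ac ψ) s + if ψ = 1 then Real.log (s-1) else 0)) := by
    refine Bd.sum _ fun ψ _ => Bd.cmul _ ?_
    by_cases h : ψ = 1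
    · subst h; simpa using Ps_ac_one
    · simpa [h] using Ps_ac_ne ψ h
  refine (h1.cmul (1/8)).congr fun s hs => ?_
  rw [hS s hs]
  simp only [mul_add, Finset.sum_add_distrib]
  congr 2
  simp only [mul_ite, mul_zero, Finset.sum_ite_eq', Finset.mem_univ, if_true]
  have : IsUnit ((k : ZMod 24)⁻¹) := by
    obtain ⟨u, hu⟩ := hu
    rw [← hu, ZMod.inv_coe_unit]; exact Units.isUnit _
  rw [MulChar.one_apply this]; simp

theorem P_asymp : Bd (fun s => (∑' p : Nat.Primes, ((p : ℕ) : ℝ) ^ (-s)) + Real.log (s - 1)) := by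
  have h1 : Bd (fun s => Ps (fun n => 1 - ac 1 n) s) := by
    refine Bd.of_le (∑' p : Nat.Primes, 25 * ((p:ℕ):ℝ) ^ (-(2:ℝ))) fun s hs => ?_
    rw [← Real.norm_eq_abs]
    refine tsum_of_norm_bounded ((primes_sum (by norm_num)).mul_left 25).hasSum fun p => ?_
    change ‖(1 - ac 1 (p:ℕ)) * ((p:ℕ):ℝ) ^ (-s)‖ ≤ _
    by_cases h5 : (p : ℕ) < 5
    · rw [ac_small 1 p.2 h5]
      have hp1 : (1:ℝ) ≤ ((p:ℕ):ℝ) := by exact_mod_cast p.2.one_lt.le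
      have : ((p:ℕ):ℝ) ^ (-s) ≤ 1 := Real.rpow_le_one_of_one_le_of_nonpos hp1 (by linarith)
      have h0 : 0 ≤ ((p:ℕ):ℝ) ^ (-s) := by positivity
      have h2 : 1 ≤ 25 * ((p:ℕ):ℝ) ^ (-(2:ℝ)) := by
        rw [Real.rpow_neg (by positivity), ← div_eq_mul_inv, le_div_iff₀ (by positivity)]
        have : ((p:ℕ):ℝ) ≤ 5 := by exact_mod_cast h5.le
        norm_cast
        nlinarith [p.2.one_lt]
      simp only [sub_zero, one_mul, Real.norm_eq_abs, abs_of_nonneg h0]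
      linarith
    · have : ac 1 p = 1 := by
        have : IsUnit ((p : ℕ) : ZMod 24) := by
          rw [ZMod.isUnit_iff_coprime]
          refine (Nat.Prime.coprime_iff_not_dvd p.2).2 fun hd => ?_
          rw [show 24 = 2^3*3 by norm_num, p.2.dvd_mul] at hd
          rcases hd with hd | hd
          · have := Nat.le_of_dvd (by norm_num) (p.2.dvd_of_dvd_pow hd); omega
          · have := Nat.le_of_dvd (by norm_num) hd; omega
        simp [ac, MulChar.one_apply this]
      rw [this]; simp
  refine (h1.add Ps_ac_one).congr fun s hs => ?_
  have : Ps (fun n => 1 - ac 1 n) s = (∑' p : Nat.Primes, ((p : ℕ) : ℝ) ^ (-s)) - Ps (ac 1) s := by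
    unfold Ps
    have hh : Summable (fun p : Nat.Primes => ac 1 p * ((p : ℕ) : ℝ) ^ (-s)) :=
      Ps_bdd_summable (fun p => psi_re_le 1 _) hs
    rw [← Summable.tsum_sub (primes_sum hs) hh]
    refine tsum_congr fun p => by ring
  rw [this]; ring

abbrev U := Bool × ℤ × ℤ

/-- norm: `x²+6y²` or `2x²+3y²` -/
def nm (u : U) : ℤ := match u with
  | (false, x, y) => x^2 + 6*y^2
  | (true, x, y) => 2*x^2 + 3*y^2

def ml (u v : U) : U := match u, v with
  | (false, x, y), (false, x', y') => (false, x*x' - 6*y*y', x*y' + y*x')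
  | (false, x, y), (true, x', y') => (true, x*x' - 3*y*y', x*y' + 2*y*x')
  | (true, x, y), (false, x', y') => (true, x*x' - 3*y*y', 2*x*y' + y*x')
  | (true, x, y), (true, x', y') => (false, 2*x*x' - 3*y*y', x*y' + y*x')

def cj (u : U) : U := (u.1, u.2.1, -u.2.2)
def sc (c : ℤ) (u : U) : U := (u.1, c*u.2.1, c*u.2.2)
def dv (c : ℤ) (u : U) : U := (u.1, u.2.1/c, u.2.2/c)
def pd (c : ℤ) (u : U) : Prop := c ∣ u.2.1 ∧ c ∣ u.2.2

instance (c : ℤ) (u : U) : Decidable (pd c u) := by unfold pd; infer_instance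

def W (a b : ZMod 3) : ℤ := if a = 0 then 0 else if b = 0 then 2 else -1
def wt (u : U) : ℤ := W u.2.1 u.2.2

lemma nm_ml (u v : U) : nm (ml u v) = nm u * nm v := by
  obtain ⟨_ | _, x, y⟩ := u <;> obtain ⟨_ | _, x', y'⟩ := v <;> simp only [nm, ml] <;> ring
lemma nm_cj (u : U) : nm (cj u) = nm u := by
  obtain ⟨_ | _, x, y⟩ := u <;> simp only [nm, cj] <;> ring
lemma nm_sc (c : ℤ) (u : U) : nm (sc c u) = c^2 * nm u := by
  obtain ⟨_ | _, x, y⟩ := u <;> simp only [nm, sc] <;> ring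
lemma cj_cj (u : U) : cj (cj u) = u := by simp [cj]
lemma ml_cj (z w : U) : ml (cj z) (ml z w) = sc (nm z) w := by
  obtain ⟨_ | _, x, y⟩ := z <;> obtain ⟨_ | _, x', y'⟩ := w <;> simp only [nm, cj, ml, sc, Prod.mk.injEq, true_and] <;>
  constructor <;> ring
lemma ml_sc (c : ℤ) (z w : U) : ml z (sc c w) = sc c (ml z w) := by
  obtain ⟨_ | _, x, y⟩ := z <;> obtain ⟨_ | _, x', y'⟩ := w <;> simp only [ml, sc, Prod.mk.injEq, true_and] <;>
  constructor <;> ring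
lemma sc_inj {c : ℤ} (hc : c ≠ 0) {u v : U} (h : sc c u = sc c v) : u = v := by
  obtain ⟨g, x, y⟩ := u; obtain ⟨g', x', y'⟩ := v
  simpa [sc, hc] using h
lemma dv_sc {c : ℤ} (hc : c ≠ 0) (u : U) : dv c (sc c u) = u := by simp [dv, sc, hc]
lemma sc_dv {c : ℤ} {u : U} (h : pd c u) : sc c (dv c u) = u := by
  obtain ⟨g, x, y⟩ := u
  simp only [sc, dv]
  rw [Int.mul_ediv_cancel' h.1, Int.mul_ediv_cancel' h.2]
lemma pd_sc (c : ℤ) (u : U) : pd c (sc c u) := ⟨dvd_mul_right _ _, dvd_mul_right _ _⟩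
lemma pd_ml {c : ℤ} {u : U} (z : U) (h : pd c u) : pd c (ml z u) := by
  rw [← sc_dv h, ml_sc]; exact pd_sc _ _

lemma wt_ml (z w : U) : wt z * wt w = wt (ml z w) + wt (ml (cj z) w) := by
  obtain ⟨_ | _, x, y⟩ := z <;> obtain ⟨_ | _, x', y'⟩ := w <;>
  simp only [wt, ml, cj] <;> push_cast <;>
  generalize (x : ZMod 3) = a <;> generalize (y : ZMod 3) = b <;>
  generalize (x' : ZMod 3) = c <;> generalize (y' : ZMod 3) = d <;>
  revert a b c d <;> decide
lemma wt_sc (c : ℤ) (hc : ¬ (3:ℤ) ∣ c) (u : U) : wt (sc c u) = wt u := by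
  have h0 : (c : ZMod 3) ≠ 0 := fun h => hc ((ZMod.intCast_zmod_eq_zero_iff_dvd c 3).1 h)
  obtain ⟨g, x, y⟩ := u
  simp only [wt, sc]; push_cast
  simp [W, h0]

noncomputable def H (n : ℕ) : Finset U :=
  ((Finset.univ : Finset Bool) ×ˢ (Finset.Icc (-(n:ℤ)) n ×ˢ Finset.Icc (-(n:ℤ)) n)).filter
    (fun u => nm u = n)

lemma nm_bound (u : U) : u.2.1^2 ≤ nm u ∧ u.2.2^2 ≤ nm u := by
  obtain ⟨_ | _, x, y⟩ := u <;> simp only [nm] <;> constructor <;> nlinarith [sq_nonneg x, sq_nonneg y]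

lemma mem_H {n : ℕ} {u : U} : u ∈ H n ↔ nm u = n := by
  simp only [H, Finset.mem_filter, Finset.mem_product, Finset.mem_univ, true_and, Finset.mem_Icc]
  refine ⟨fun h => h.2, fun h => ⟨?_, h⟩⟩
  obtain ⟨h1, h2⟩ := nm_bound u
  rw [h] at h1 h2
  have hn : (0:ℤ) ≤ n := by positivity
  refine ⟨⟨?_, ?_⟩, ?_, ?_⟩ <;> nlinarith

noncomputable def b (n : ℕ) : ℤ := ∑ u ∈ H n, wt u

lemma b_one : b 1 = 4 := by decide

/-- shift by an element of norm `p` -/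
lemma shift (p n : ℕ) (hp : p ≠ 0) (z : U) (hz : nm z = p) :
    ∑ w ∈ H n, wt (ml z w) = ∑ u ∈ (H (p*n)).filter (fun u => pd p (ml (cj z) u)), wt u := by
  have hp' : (p:ℤ) ≠ 0 := by exact_mod_cast hp
  refine Finset.sum_nbij' (fun w => ml z w) (fun u => dv p (ml (cj z) u)) ?_ ?_ ?_ ?_ ?_
  · intro w hw
    rw [mem_H] at hw
    rw [Finset.mem_filter, mem_H, nm_ml, hz, hw, ml_cj, hz]
    exact ⟨by push_cast; ring, pd_sc _ _⟩
  · intro u hu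
    rw [Finset.mem_filter, mem_H] at hu
    rw [mem_H]
    have h := congrArg nm (sc_dv hu.2)
    rw [nm_sc, nm_ml, nm_cj, hz, hu.1] at h
    have : (p:ℤ)^2 * nm (dv p (ml (cj z) u)) = (p:ℤ)^2 * n := by rw [h]; push_cast; ring
    exact mul_left_cancel₀ (pow_ne_zero 2 hp') this
  · intro w _
    change dv p (ml (cj z) (ml z w)) = w
    rw [ml_cj, hz, dv_sc hp']
  · intro u hu
    rw [Finset.mem_filter] at hu
    change ml z (dv p (ml (cj z) u)) = u
    apply sc_inj hp'
    rw [← ml_sc, sc_dv hu.2]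
    have := ml_cj (cj z) u
    rwa [cj_cj, nm_cj, hz] at this
  · intro w _; rfl

lemma scaled (p n : ℕ) (hp : p.Prime) (h3 : p ≠ 3) :
    ∑ u ∈ (H (p*n)).filter (fun u => pd p u), wt u = if p ∣ n then b (n/p) else 0 := by
  have hp' : (p:ℤ) ≠ 0 := by exact_mod_cast hp.ne_zero
  have h3' : ¬ (3:ℤ) ∣ p := by
    intro h
    have : 3 ∣ p := by exact_mod_cast h
    exact h3 ((Nat.prime_dvd_prime_iff_eq Nat.prime_three hp).1 this).symm
  split_ifs with h
  · obtain ⟨m, rfl⟩ := h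
    rw [Nat.mul_div_cancel_left _ hp.pos]
    symm
    refine Finset.sum_nbij' (fun w => sc p w) (fun u => dv p u) ?_ ?_ ?_ ?_ ?_
    · intro w hw
      rw [mem_H] at hw
      rw [Finset.mem_filter, mem_H, nm_sc, hw]
      exact ⟨by push_cast; ring, pd_sc _ _⟩
    · intro u hu
      rw [Finset.mem_filter, mem_H] at hu
      rw [mem_H]
      have h := congrArg nm (sc_dv hu.2)
      rw [nm_sc, hu.1] at h
      have : (p:ℤ)^2 * nm (dv p u) = (p:ℤ)^2 * m := by rw [h]; push_cast; ring
      exact mul_left_cancel₀ (pow_ne_zero 2 hp') this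
    · intro w _; exact dv_sc hp' w
    · intro u hu; exact sc_dv (Finset.mem_filter.1 hu).2
    · intro w _; exact (wt_sc p h3' w).symm
  · refine Finset.sum_eq_zero fun u hu => ?_
    exfalso; apply h
    rw [Finset.mem_filter, mem_H] at hu
    have h := congrArg nm (sc_dv hu.2)
    rw [nm_sc, hu.1] at h
    have : (p:ℤ) * ((p:ℤ) * nm (dv p u)) = (p:ℤ) * n := by rw [← mul_assoc, ← sq, h]; push_cast; ring
    have := mul_left_cancel₀ hp' this
    have : (p:ℤ) ∣ n := ⟨_, this.symm⟩
    exact_mod_cast this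

lemma p_not_dvd_small {p : ℕ} (hp : p.Prime) (h5 : 5 ≤ p) : ¬ (p:ℤ) ∣ 2 ∧ ¬ (p:ℤ) ∣ 3 ∧ ¬ (p:ℤ) ∣ 6 := by
  refine ⟨fun h => ?_, fun h => ?_, fun h => ?_⟩
  · have := Int.le_of_dvd (by norm_num) h; omega
  · have := Int.le_of_dvd (by norm_num) h; omega
  · have h : p ∣ 2 * 3 := by exact_mod_cast h
    rcases hp.dvd_mul.1 h with h | h <;> have := Nat.le_of_dvd (by norm_num) h <;> omega

/-- if `p ∣ nm u` and `p` divides one coordinate, then it divides both -/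
lemma pd_of_snd {p : ℕ} (hp : p.Prime) (h5 : 5 ≤ p) {u : U} (h : (p:ℤ) ∣ nm u) (hy : (p:ℤ) ∣ u.2.2) :
    pd p u := by
  have hpp := Nat.prime_iff_prime_int.1 hp
  obtain ⟨n2, n3, n6⟩ := p_not_dvd_small hp h5
  refine ⟨?_, hy⟩
  obtain ⟨_ | _, x, y⟩ := u <;> simp only [nm] at h hy ⊢
  · have : (p:ℤ) ∣ x^2 := (Int.dvd_add_left (((dvd_pow hy two_ne_zero).mul_left 6))).1 h
    exact hpp.dvd_of_dvd_pow this
  · have : (p:ℤ) ∣ 2*x^2 := (Int.dvd_add_left (((dvd_pow hy two_ne_zero).mul_left 3))).1 h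
    exact hpp.dvd_of_dvd_pow ((hpp.dvd_mul.1 this).resolve_left n2)

lemma pd_of_fst {p : ℕ} (hp : p.Prime) (h5 : 5 ≤ p) {u : U} (h : (p:ℤ) ∣ nm u) (hx : (p:ℤ) ∣ u.2.1) :
    pd p u := by
  have hpp := Nat.prime_iff_prime_int.1 hp
  obtain ⟨n2, n3, n6⟩ := p_not_dvd_small hp h5
  refine ⟨hx, ?_⟩
  obtain ⟨_ | _, x, y⟩ := u <;> simp only [nm] at h hx ⊢
  · have : (p:ℤ) ∣ 6*y^2 := (Int.dvd_add_right (dvd_pow hx two_ne_zero)).1 h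
    exact hpp.dvd_of_dvd_pow ((hpp.dvd_mul.1 this).resolve_left n6)
  · have : (p:ℤ) ∣ 3*y^2 := (Int.dvd_add_right (((dvd_pow hx two_ne_zero).mul_left 2))).1 h
    exact hpp.dvd_of_dvd_pow ((hpp.dvd_mul.1 this).resolve_left n3)

lemma not_pd_of_norm {p : ℕ} (hp : p.Prime) {z : U} (hz : nm z = p) : ¬ pd p z := by
  intro h
  have e := congrArg nm (sc_dv h)
  rw [nm_sc, hz] at e
  have hp' : (p:ℤ) ≠ 0 := by exact_mod_cast hp.ne_zero
  have : (p:ℤ) * ((p:ℤ) * nm (dv p z)) = (p:ℤ) * 1 := by rw [← mul_assoc, ← sq, e, mul_one]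
  have := mul_left_cancel₀ hp' this
  have : (p:ℤ) ∣ 1 := ⟨_, this.symm⟩
  exact (Nat.prime_iff_prime_int.1 hp).not_dvd_one this

lemma D_or {p : ℕ} (hp : p.Prime) (h5 : 5 ≤ p) {z u : U} (hz : nm z = p) (hu : (p:ℤ) ∣ nm u) :
    pd p (ml (cj z) u) ∨ pd p (ml z u) := by
  have hpp := Nat.prime_iff_prime_int.1 hp
  obtain ⟨n2, n3, n6⟩ := p_not_dvd_small hp h5
  have key : (p:ℤ) ∣ (ml (cj z) u).2.2 * (ml z u).2.2 := by
    obtain ⟨c, hc⟩ := hu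
    obtain ⟨_ | _, x, y⟩ := z <;> obtain ⟨_ | _, x', y'⟩ := u <;> simp only [nm, cj, ml] at hz hc ⊢
    · exact ⟨y'^2 - y^2*c, by linear_combination y'^2 * hz - y^2 * hc⟩
    · exact ⟨y'^2 - 2*y^2*c, by linear_combination y'^2 * hz - 2*y^2 * hc⟩
    · exact ⟨2*y'^2 - y^2*c, by linear_combination 2*y'^2 * hz - y^2 * hc⟩
    · refine (hpp.dvd_mul.1 (?_ : (p:ℤ) ∣ 2 * _)).resolve_left n2
      exact ⟨y'^2 - y^2*c, by linear_combination y'^2 * hz - y^2 * hc⟩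
  rcases hpp.dvd_mul.1 key with h | h
  · exact Or.inl (pd_of_snd hp h5 (by rw [nm_ml]; exact hu.mul_left _) h)
  · exact Or.inr (pd_of_snd hp h5 (by rw [nm_ml]; exact hu.mul_left _) h)

lemma D_and {p : ℕ} (hp : p.Prime) (h5 : 5 ≤ p) {z u : U} (hz : nm z = p) :
    (pd p (ml (cj z) u) ∧ pd p (ml z u)) ↔ pd p u := by
  refine ⟨fun ⟨h1, h2⟩ => ?_, fun h => ⟨pd_ml _ h, pd_ml _ h⟩⟩
  have hpp := Nat.prime_iff_prime_int.1 hp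
  obtain ⟨n2, n3, n6⟩ := p_not_dvd_small hp h5
  have hx : ¬ (p:ℤ) ∣ z.2.1 := fun h => not_pd_of_norm hp hz (pd_of_fst hp h5 (by rw [hz]) h)
  have hy : ¬ (p:ℤ) ∣ z.2.2 := fun h => not_pd_of_norm hp hz (pd_of_snd hp h5 (by rw [hz]) h)
  have h4 : ∀ a : ℤ, (p:ℤ) ∣ 4 * a → (p:ℤ) ∣ a := fun a h => by
    rw [show (4:ℤ)*a = 2*(2*a) by ring] at h
    exact (hpp.dvd_mul.1 ((hpp.dvd_mul.1 h).resolve_left n2)).resolve_left n2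
  have ha := dvd_add h1.2 h2.2
  have hs := dvd_sub h2.2 h1.2
  have e1 : (p:ℤ) ∣ z.2.1 * u.2.2 := by
    apply h4
    obtain ⟨_ | _, x, y⟩ := z <;> obtain ⟨_ | _, x', y'⟩ := u <;> simp only [cj, ml] at ha ⊢ <;> ring_nf at ha ⊢
    · simpa [mul_assoc, mul_comm, mul_left_comm] using ha.mul_right 2
    · simpa [mul_assoc, mul_comm, mul_left_comm] using ha.mul_right 2
    · simpa [mul_assoc, mul_comm, mul_left_comm] using ha
    · simpa [mul_assoc, mul_comm, mul_left_comm] using ha.mul_right 2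
  have e2 : (p:ℤ) ∣ z.2.2 * u.2.1 := by
    apply h4
    obtain ⟨_ | _, x, y⟩ := z <;> obtain ⟨_ | _, x', y'⟩ := u <;> simp only [cj, ml] at hs ⊢ <;> ring_nf at hs ⊢
    · simpa [mul_assoc, mul_comm, mul_left_comm] using hs.mul_right 2
    · simpa [mul_assoc, mul_comm, mul_left_comm] using hs
    · simpa [mul_assoc, mul_comm, mul_left_comm] using hs.mul_right 2
    · simpa [mul_assoc, mul_comm, mul_left_comm] using hs.mul_right 2
  exact ⟨(hpp.dvd_mul.1 e2).resolve_left hy, (hpp.dvd_mul.1 e1).resolve_left hx⟩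

lemma hecke_split {p : ℕ} (hp : p.Prime) (h5 : 5 ≤ p) {z : U} (hz : nm z = p) (n : ℕ) :
    wt z * b n = b (p*n) + if p ∣ n then b (n/p) else 0 := by
  have h1 := shift p n hp.ne_zero z hz
  have h2 := shift p n hp.ne_zero (cj z) (by rw [nm_cj, hz])
  rw [cj_cj] at h2
  rw [← scaled p n hp (by omega), b, Finset.mul_sum]
  simp_rw [wt_ml]
  rw [Finset.sum_add_distrib, h1, h2, b, Finset.sum_filter, Finset.sum_filter, Finset.sum_filter,
    ← Finset.sum_add_distrib, ← Finset.sum_add_distrib]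
  refine Finset.sum_congr rfl fun u hu => ?_
  rw [mem_H] at hu
  have ho := D_or hp h5 hz (u := u) (by rw [hu]; push_cast; exact dvd_mul_right _ _)
  have ha := D_and hp h5 hz (u := u)
  by_cases c1 : pd p (ml (cj z) u) <;> by_cases c2 : pd p (ml z u)
  · simp [c1, c2, ha.1 ⟨c1, c2⟩]
  · have : ¬ pd p u := fun h => c2 (ha.2 h).2
    simp [c1, c2, this]
  · have : ¬ pd p u := fun h => c1 (ha.2 h).1
    simp [c1, c2, this]
  · tauto

lemma thue_pre {p : ℕ} (hp : p.Prime) (t : ZMod p) :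
    ∃ X Y : ℤ, (X ≠ 0 ∨ Y ≠ 0) ∧ X^2 < p ∧ Y^2 < p ∧ (X : ZMod p) = t * Y := by
  set m := Nat.sqrt p with hm
  haveI : Fact p.Prime := ⟨hp⟩
  have hm1 : m * m < p := by
    rcases (Nat.sqrt_le p).lt_or_eq with h | h
    · exact h
    · exfalso
      have h1 : m ≠ 1 := fun h' => hp.one_lt.ne (by rw [← h, ← hm, h'])
      exact Nat.not_prime_mul h1 h1 (by rw [hm, h]; exact hp)
  have hm2 : p < (m+1)*(m+1) := Nat.lt_succ_sqrt p
  obtain ⟨⟨i, j⟩, h1, ⟨i', j'⟩, h2, hne, he⟩ := Finset.exists_ne_map_eq_of_card_lt_of_maps_to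
    (s := Finset.range (m+1) ×ˢ Finset.range (m+1)) (t := (Finset.univ : Finset (ZMod p)))
    (f := fun q => (q.1 : ZMod p) - t * q.2)
    (by rw [Finset.card_product, Finset.card_range, Finset.card_univ, ZMod.card]; exact hm2)
    (fun _ _ => Finset.mem_univ _)
  simp only [Finset.mem_product, Finset.mem_range] at h1 h2
  have hb : ∀ a c : ℕ, a < m+1 → c < m+1 → ((a:ℤ) - c)^2 < p := by
    intro a c ha hc
    have : ((a:ℤ) - c)^2 ≤ m^2 := by
      apply sq_le_sq'  <;> omega
    have h' : ((m:ℤ))*m < p := by exact_mod_cast hm1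
    nlinarith
  refine ⟨(i:ℤ) - i', (j:ℤ) - j', ?_, hb _ _ h1.1 h2.1, hb _ _ h1.2 h2.2, ?_⟩
  · by_contra hcon
    push Not at hcon
    apply hne
    simp only [Prod.mk.injEq]
    omega
  · push_cast
    simp only at he
    linear_combination he

lemma thue {p : ℕ} (hp : p.Prime) (h5 : 5 ≤ p) (hs : IsSquare (-6 : ZMod p)) : ∃ z : U, nm z = p := by
  obtain ⟨t, ht⟩ := hs
  obtain ⟨X, Y, h0, hX, hY, hXY⟩ := thue_pre hp t
  have hd : (p:ℤ) ∣ X^2 + 6*Y^2 := by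
    rw [← ZMod.intCast_zmod_eq_zero_iff_dvd]
    push_cast
    rw [hXY]
    linear_combination -(Y:ZMod p)^2 * ht
  obtain ⟨j, hj⟩ := hd
  have hp0 : (0:ℤ) < p := by exact_mod_cast hp.pos
  have hpos : 0 < X^2 + 6*Y^2 := by
    rcases h0 with h | h
    · have : 0 < X^2 := by positivity
      nlinarith [sq_nonneg Y]
    · have : 0 < Y^2 := by positivity
      nlinarith [sq_nonneg X]
  have j1 : 0 < j := by
    rw [hj] at hpos; exact pos_of_mul_pos_right hpos hp0.le
  have j7 : j < 7 := by
    by_contra hc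
    have : (p:ℤ) * 7 ≤ p * j := by gcongr; omega
    nlinarith
  have ev : ∀ a : ℤ, (2:ℤ) ∣ a^2 → (2:ℤ) ∣ a := fun a h => Int.prime_two.dvd_of_dvd_pow h
  have ev3 : ∀ a : ℤ, (3:ℤ) ∣ a^2 → (3:ℤ) ∣ a := fun a h => Int.prime_three.dvd_of_dvd_pow h
  interval_cases j
  · exact ⟨(false, X, Y), by simp only [nm]; linarith⟩
  · obtain ⟨x, rfl⟩ := ev X (by omega)
    exact ⟨(true, x, Y), by simp only [nm]; linarith⟩
  · obtain ⟨x, rfl⟩ := ev3 X (by omega)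
    exact ⟨(true, Y, x), by simp only [nm]; linarith⟩
  · obtain ⟨x, rfl⟩ := ev X (by omega)
    obtain ⟨y, rfl⟩ := ev Y (by ring_nf at hj; omega)
    exact ⟨(false, x, y), by simp only [nm]; linarith⟩
  · have h5d : (5:ℤ) ∣ (X + 3*Y)*(X - 3*Y) := ⟨p - 3*Y^2, by linear_combination hj⟩
    have p5 : Prime (5:ℤ) := Nat.prime_iff_prime_int.1 Nat.prime_five
    rcases p5.dvd_mul.1 h5d with ⟨A, hA⟩ | ⟨A, hA⟩
    · refine ⟨(true, A, Y - A), ?_⟩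
      have : X = 5*A - 3*Y := by linarith
      subst this
      simp only [nm]; nlinarith
    · refine ⟨(true, A, Y + A), ?_⟩
      have : X = 5*A + 3*Y := by linarith
      subst this
      simp only [nm]; nlinarith
  · obtain ⟨x, rfl⟩ := ev X (by omega)
    obtain ⟨x, rfl⟩ := ev3 x (by ring_nf at hj; omega)
    exact ⟨(false, Y, x), by simp only [nm]; linarith⟩

/-- if p divides a norm nontrivially then -6 is a square -/
lemma sq_of_norm {p : ℕ} (hp : p.Prime) (h5 : 5 ≤ p) {u : U} (h : (p:ℤ) ∣ nm u) (hu : ¬ pd p u) :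
    IsSquare (-6 : ZMod p) := by
  haveI : Fact p.Prime := ⟨hp⟩
  have hy : ((u.2.2 : ℤ) : ZMod p) ≠ 0 := fun h' =>
    hu (pd_of_snd hp h5 h ((ZMod.intCast_zmod_eq_zero_iff_dvd _ p).1 h'))
  rw [← ZMod.intCast_zmod_eq_zero_iff_dvd] at h
  obtain ⟨_ | _, x, y⟩ := u <;> simp only [nm] at h hy <;> push_cast at h
  · refine ⟨(x:ZMod p) / y, ?_⟩
    field_simp
    linear_combination -h
  · refine ⟨2*(x:ZMod p) / y, ?_⟩
    field_simp
    linear_combination -2*h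

lemma hecke_inert {p : ℕ} (hp : p.Prime) (h5 : 5 ≤ p) (hz : ∀ z : U, nm z ≠ p) (n : ℕ) :
    0 = b (p*n) - if p ∣ n then b (n/p) else 0 := by
  rw [← scaled p n hp (by omega), b, Finset.filter_true_of_mem, sub_self]
  intro u hu
  rw [mem_H] at hu
  by_contra hc
  obtain ⟨z, h⟩ := thue hp h5 (sq_of_norm hp h5 (u := u) (by rw [hu]; push_cast; exact dvd_mul_right _ _) hc)
  exact hz z h

/-- uniform Hecke relation -/
lemma hecke {p : ℕ} (hp : p.Prime) (h5 : 5 ≤ p) : ∃ α κ : ℤ,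
    (α = 2 ∧ κ = 1 ∨ α = -1 ∧ κ = 1 ∨ α = 0 ∧ κ = -1) ∧
    ∀ n, α * b n = b (p*n) + κ * if p ∣ n then b (n/p) else 0 := by
  by_cases h : ∃ z : U, nm z = p
  · obtain ⟨z, hz⟩ := h
    refine ⟨wt z, 1, ?_, fun n => by rw [one_mul]; exact hecke_split hp h5 hz n⟩
    have hx : (z.2.1 : ZMod 3) ≠ 0 := by
      intro h'
      rw [ZMod.intCast_zmod_eq_zero_iff_dvd] at h'
      have : (3:ℤ) ∣ p := by
        rw [← hz]
        obtain ⟨_ | _, x, y⟩ := z <;> simp only [nm] at h' ⊢ <;> obtain ⟨c, rfl⟩ := h'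
        · exact ⟨3*c^2+2*y^2, by ring⟩
        · exact ⟨6*c^2+y^2, by ring⟩
      have : 3 ∣ p := by exact_mod_cast this
      have := (Nat.prime_dvd_prime_iff_eq Nat.prime_three hp).1 this
      omega
    simp only [wt, W, if_neg hx]
    split_ifs <;> simp
  · push Not at h
    refine ⟨0, -1, by simp, fun n => ?_⟩
    have := hecke_inert hp h5 h n
    linarith

lemma b_mul_pow {p : ℕ} (hp : p.Prime) (h5 : 5 ≤ p) (m : ℕ) (hm : ¬ p ∣ m) (k : ℕ) :
    4 * b (p^k * m) = b (p^k) * b m := by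
  obtain ⟨α, κ, -, h⟩ := hecke hp h5
  have hb1 : ¬ p ∣ 1 := hp.one_lt.ne' ∘ Nat.dvd_one.1
  induction k using Nat.twoStepInduction with
  | zero => simp [b_one]
  | one =>
    have h1 := h m
    have h2 := h 1
    rw [if_neg hm] at h1
    rw [if_neg hb1, b_one, mul_one] at h2
    rw [pow_one]
    linear_combination -4*h1 + b m * h2
  | more k ih1 ih2 =>
    have h1 := h (p^(k+1) * m)
    have h2 := h (p^(k+1))
    rw [if_pos (Dvd.dvd.mul_right (dvd_pow_self _ (by omega)) _)] at h1
    rw [if_pos (dvd_pow_self _ (by omega))] at h2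
    rw [show p^(k+1)*m = p*(p^k*m) by ring, Nat.mul_div_cancel_left _ hp.pos] at h1
    rw [show p^(k+1) = p*p^k by ring, Nat.mul_div_cancel_left _ hp.pos] at h2
    rw [show p^(k+1)*m = p*(p^k*m) by ring, show p^(k+1) = p*p^k by ring] at ih2
    rw [show p^(k+2)*m = p*(p*(p^k*m)) by ring, show p^(k+2) = p*(p*p^k) by ring]
    linear_combination -4*h1 + b m * h2 + α * ih2 - κ * ih1

lemma b_pow_bound {p : ℕ} (hp : p.Prime) (h5 : 5 ≤ p) (k : ℕ) : |b (p^k)| ≤ 4 * 2^k := by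
  obtain ⟨α, κ, hc, h⟩ := hecke hp h5
  have hb1 : ¬ p ∣ 1 := hp.one_lt.ne' ∘ Nat.dvd_one.1
  have hrec : ∀ k, b (p^(k+2)) = α * b (p^(k+1)) - κ * b (p^k) := by
    intro k
    have h2 := h (p^(k+1))
    rw [if_pos (dvd_pow_self _ (by omega))] at h2
    rw [show p^(k+1) = p*p^k by ring, Nat.mul_div_cancel_left _ hp.pos] at h2
    rw [show p^(k+2) = p*(p*p^k) by ring, show p^(k+1) = p*p^k by ring]
    linarith
  have h1 : b p = 4*α := by
    have h2 := h 1
    rw [if_neg hb1, b_one, mul_one] at h2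
    linarith
  rcases hc with ⟨rfl, rfl⟩ | ⟨rfl, rfl⟩ | ⟨rfl, rfl⟩
  · have : ∀ k : ℕ, b (p^k) = 4*(k+1) ∧ b (p^(k+1)) = 4*(k+2) := by
      intro k
      induction k with
      | zero => simp [b_one, h1]
      | succ k ih => 
        refine ⟨by rw [ih.2]; push_cast; ring, ?_⟩
        rw [hrec, ih.1, ih.2]; push_cast; ring
    rw [(this k).1, abs_of_nonneg (by positivity)]
    have : k + 1 ≤ 2^k := Nat.lt_two_pow_self
    have : (k:ℤ) + 1 ≤ 2^k := by exact_mod_cast this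
    linarith
  · have : ∀ k : ℕ, (b (p^k), b (p^(k+1))) ∈ ({(4,-4),(-4,0),(0,4)} : Set (ℤ×ℤ)) := by
      intro k
      induction k with
      | zero => simp [b_one, h1]
      | succ k ih => 
        rw [hrec]
        simp only [Set.mem_insert_iff, Set.mem_singleton_iff, Prod.mk.injEq] at ih ⊢
        omega
    have h4 : |b (p^k)| ≤ 4 := by
      have := this k
      simp only [Set.mem_insert_iff, Set.mem_singleton_iff, Prod.mk.injEq] at this
      rw [abs_le]; omega
    have : (1:ℤ) ≤ 2^k := one_le_pow₀ (by norm_num)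
    linarith
  · have : ∀ k : ℕ, (b (p^k), b (p^(k+1))) ∈ ({(4,0),(0,4)} : Set (ℤ×ℤ)) := by
      intro k
      induction k with
      | zero => simp [b_one, h1]
      | succ k ih => 
        rw [hrec]
        simp only [Set.mem_insert_iff, Set.mem_singleton_iff, Prod.mk.injEq] at ih ⊢
        omega
    have h4 : |b (p^k)| ≤ 4 := by
      have := this k
      simp only [Set.mem_insert_iff, Set.mem_singleton_iff, Prod.mk.injEq] at this
      rw [abs_le]; omega
    have : (1:ℤ) ≤ 2^k := one_le_pow₀ (by norm_num)
    linarith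

lemma b_three (n : ℕ) (hn : 3 ∣ n) : b n = 0 := by
  refine Finset.sum_eq_zero fun u hu => ?_
  rw [mem_H] at hu
  have h3 : (3:ℤ) ∣ nm u := by rw [hu]; exact_mod_cast hn
  have : (u.2.1 : ZMod 3) = 0 := by
    rw [ZMod.intCast_zmod_eq_zero_iff_dvd]
    obtain ⟨_ | _, x, y⟩ := u <;> simp only [nm] at h3 ⊢ <;> apply Int.prime_three.dvd_of_dvd_pow (n := 2) <;> push_cast <;> omega
  simp [wt, W, this]

/-- sign characters mod 8 are arbitrary functions `ε` with multiplicativity and vanishing at evens -/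
structure Sg (ε : ZMod 8 → ℤ) : Prop where
  one : ε 1 = 1
  mul : ∀ x y, ε (x*y) = ε x * ε y
  bd : ∀ x, |ε x| ≤ 1
  ev : ∀ x : ZMod 8, 2 ∣ x → ε x = 0

noncomputable def A (ε : ZMod 8 → ℤ) (n : ℕ) : ℝ := (ε n : ℝ) * b n / 4

lemma A_zero {ε} (h : Sg ε) : A ε 0 = 0 := by
  simp [A, h.ev 0 (dvd_zero _)]
lemma A_one {ε} (h : Sg ε) : A ε 1 = 1 := by
  simp [A, h.one, b_one]
lemma A_small {ε} (h : Sg ε) (p k : ℕ) (hp : p.Prime) (hk : 1 ≤ k) (h5 : p < 5) : A ε (p^k) = 0 := by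
  rcases prime_lt_five hp h5 with rfl | rfl
  · rw [A, h.ev, Int.cast_zero, zero_mul, zero_div]
    push_cast
    exact dvd_pow_self _ (by omega)
  · rw [A, b_three _ (dvd_pow_self _ (by omega))]; simp
lemma A_bd {ε} (h : Sg ε) (p k : ℕ) (hp : p.Prime) : |A ε (p^k)| ≤ 2^k := by
  by_cases h5 : 5 ≤ p
  · have h1 := b_pow_bound hp h5 k
    have h2 := h.bd ((p^k : ℕ))
    have h1' : |(b (p^k) : ℝ)| ≤ 4 * 2^k := by exact_mod_cast h1
    have h2' : |(ε ((p^k : ℕ)) : ℝ)| ≤ 1 := by exact_mod_cast h2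
    rw [A, abs_div, abs_mul, abs_of_pos (by norm_num : (0:ℝ) < 4)]
    rw [div_le_iff₀ (by norm_num)]
    nlinarith [abs_nonneg (b (p^k) : ℝ), abs_nonneg (ε ((p^k : ℕ)) : ℝ)]
  · rcases k with _ | k
    · simp [A_one h]
    · rw [A_small h p (k+1) hp (by omega) (by omega)]; simp; 
lemma A_pp {ε} (h : Sg ε) (p k m : ℕ) (hp : p.Prime) (hk : 1 ≤ k) (hm : ¬ p ∣ m) :
    A ε (p^k * m) = A ε (p^k) * A ε m := by
  by_cases h5 : 5 ≤ p
  · have h1 := b_mul_pow hp h5 m hm k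
    have h1' : 4 * (b (p^k*m) : ℝ) = b (p^k) * b m := by exact_mod_cast h1
    simp only [A]
    rw [Nat.cast_mul, h.mul]; push_cast
    linear_combination (ε ((p:ZMod 8)^k) * ε m : ℝ)/16 * h1'
  · rw [A_small h p k hp hk (by omega), zero_mul]
    rcases prime_lt_five hp (by omega) with rfl | rfl
    · rw [A, h.ev, Int.cast_zero, zero_mul, zero_div]
      push_cast
      exact (dvd_pow_self _ (by omega)).mul_right _
    · rw [A, b_three _ ((dvd_pow_self _ (by omega)).mul_right _)]; simp
lemma A_mul {ε} (h : Sg ε) (m n : ℕ) (hmn : Nat.Coprime m n) : A ε (m*n) = A ε m * A ε n := by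
  induction m using Nat.recOnPrimePow generalizing n with
  | zero => simp [A_zero h]
  | one => simp [A_one h]
  | prime_pow_mul a p k hp ha hk ih =>
    rw [Nat.coprime_mul_iff_left] at hmn
    have hpn : ¬ p ∣ n := by
      have := hmn.1
      rw [Nat.coprime_pow_left_iff hk] at this
      exact (hp.coprime_iff_not_dvd).1 this
    rw [mul_assoc, A_pp h p k _ hp hk (by rw [hp.dvd_mul]; tauto), ih n hmn.2, A_pp h p k a hp hk ha, mul_assoc]

lemma periodic_bound (f : ℤ → ℤ) (hb : ∀ y, |f y| ≤ 2) (h3 : ∀ y, f y + f (y+8) + f (y+16) = 0) :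
    ∀ (L : ℕ) (a : ℤ), |∑ i ∈ Finset.range L, f (a+i)| ≤ 48 := by
  intro L
  induction L using Nat.strong_induction_on with
  | _ L ih =>
    intro a
    by_cases hL : L < 24
    · calc |∑ i ∈ Finset.range L, f (a+i)| ≤ ∑ i ∈ Finset.range L, |f (a+i)| := Finset.abs_sum_le_sum_abs _ _
        _ ≤ ∑ i ∈ Finset.range L, 2 := Finset.sum_le_sum fun i _ => hb _
        _ ≤ 48 := by simp; omega
    · obtain ⟨M, rfl⟩ : ∃ M, L = 24 + M := ⟨L - 24, by omega⟩
      rw [Finset.sum_range_add]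
      have h0 : ∑ i ∈ Finset.range 24, f (a+i) = 0 := by
        simp only [Finset.sum_range_succ, Finset.sum_range_zero]
        push_cast
        have e := fun c : ℤ => h3 (a+c)
        have e0 := e 0; have e1 := e 1; have e2 := e 2; have e3 := e 3
        have e4 := e 4; have e5 := e 5; have e6 := e 6; have e7 := e 7
        simp only [add_assoc] at e0 e1 e2 e3 e4 e5 e6 e7
        norm_num at e0 e1 e2 e3 e4 e5 e6 e7 ⊢
        linarith
      rw [h0, zero_add]
      have := ih M (by omega) (a + 24)
      convert this using 4
      push_cast; ring_nf

lemma Icc_bound (f : ℤ → ℤ) (hb : ∀ y, |f y| ≤ 2) (h3 : ∀ y, f y + f (y+8) + f (y+16) = 0) (a c : ℤ) :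
    |∑ y ∈ Finset.Icc a c, f y| ≤ 48 := by
  have := periodic_bound f hb h3 (c + 1 - a).toNat a
  convert this using 2
  refine Finset.sum_nbij' (fun y => (y - a).toNat) (fun i => a + i) ?_ ?_ ?_ ?_ ?_
  · intro y hy; simp only [Finset.mem_Icc, Finset.mem_range] at *; omega
  · intro y hy; simp only [Finset.mem_Icc, Finset.mem_range] at *; omega
  · intro y hy; simp only [Finset.mem_Icc] at *; omega
  · intro y hy; simp
  · intro y hy; simp only [Finset.mem_Icc] at *; congr 1; omega

lemma filter_interval (c A M : ℤ) (hc : 0 < c) :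
    ∃ a d, (Finset.Icc (-M) M).filter (fun y => c*y^2 ≤ A) = Finset.Icc a d := by
  by_cases hA : 0 ≤ A
  · have h0 : 0 ≤ A / c := Int.ediv_nonneg hA hc.le
    refine ⟨max (-M) (-Int.sqrt (A/c)), min M (Int.sqrt (A/c)), ?_⟩
    ext y
    simp only [Finset.mem_filter, Finset.mem_Icc, max_le_iff, le_min_iff]
    have : c*y^2 ≤ A ↔ (-Int.sqrt (A/c) ≤ y ∧ y ≤ Int.sqrt (A/c)) := by
      rw [mul_comm, ← Int.le_ediv_iff_mul_le hc, ← abs_le]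
      have hs : Int.sqrt (A/c) = (Nat.sqrt (A/c).toNat : ℤ) := rfl
      rw [hs, Int.abs_eq_natAbs, Nat.cast_le, Nat.le_sqrt', ← Int.natAbs_sq]
      zify
      rw [Int.toNat_of_nonneg h0]
    rw [this]; tauto
  · refine ⟨1, 0, ?_⟩
    rw [Finset.Icc_eq_empty (by norm_num : ¬ (1:ℤ) ≤ 0), Finset.filter_eq_empty_iff]
    intro y _ h
    apply hA
    exact le_trans (by positivity) h

noncomputable def BX (N : ℕ) : Finset U :=
  ((Finset.univ : Finset Bool) ×ˢ (Finset.Icc (-(Nat.sqrt N:ℤ)) (Nat.sqrt N) ×ˢ Finset.Icc (-(Nat.sqrt N:ℤ)) (Nat.sqrt N)))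

lemma mem_BX {N : ℕ} {u : U} (h : nm u ≤ N) : u ∈ BX N := by
  obtain ⟨h1, h2⟩ := nm_bound u
  have key : ∀ x : ℤ, x^2 ≤ N → -(Nat.sqrt N:ℤ) ≤ x ∧ x ≤ Nat.sqrt N := by
    intro x hx
    rw [← abs_le, Int.abs_eq_natAbs, Nat.cast_le, Nat.le_sqrt']
    zify; simpa using hx
  simp only [BX, Finset.mem_product, Finset.mem_univ, true_and, Finset.mem_Icc]
  exact ⟨key _ (h1.trans h), key _ (h2.trans h)⟩

lemma sum_swap (N : ℕ) (F : U → ℤ) :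
    ∑ n ∈ Finset.Icc 1 N, ∑ u ∈ H n, F u = ∑ u ∈ (BX N).filter (fun u => 1 ≤ nm u ∧ nm u ≤ N), F u := by
  rw [Finset.sum_sigma']
  refine Finset.sum_nbij' (fun q => q.2) (fun u => ⟨(nm u).toNat, u⟩) ?_ ?_ ?_ ?_ ?_
  · rintro ⟨n, u⟩ h
    simp only [Finset.mem_sigma, Finset.mem_Icc, mem_H] at h
    simp only [Finset.mem_filter]
    have h1 : nm u ≤ N := by rw [h.2]; exact_mod_cast h.1.2
    refine ⟨mem_BX h1, ?_, h1⟩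
    rw [h.2]; exact_mod_cast h.1.1
  · intro u h
    simp only [Finset.mem_filter] at h
    simp only [Finset.mem_sigma, Finset.mem_Icc, mem_H]
    omega
  · rintro ⟨n, u⟩ h
    simp only [Finset.mem_sigma, Finset.mem_Icc, mem_H] at h
    obtain ⟨_, h⟩ := h
    have : (nm u).toNat = n := by omega
    simp [this]
  · intro u h; rfl
  · intro u h; rfl

lemma nm_eq_zero {u : U} (h : nm u < 1) : wt u = 0 := by
  have h1 := (nm_bound u).1
  have : u.2.1 = 0 := by nlinarith [sq_nonneg u.2.1]
  simp [wt, W, this]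

lemma partial_int (ε : ZMod 8 → ℤ) (hε : ∀ x, |ε x| ≤ 1) (N : ℕ) :
    |∑ n ∈ Finset.Icc 1 N, ε n * b n| ≤ 2*((2*(Nat.sqrt N:ℤ)+1)*48) := by
  have e1 : ∑ n ∈ Finset.Icc 1 N, ε n * b n = ∑ n ∈ Finset.Icc 1 N, ∑ u ∈ H n, ε ((nm u : ℤ)) * wt u := by
    refine Finset.sum_congr rfl fun n _ => ?_
    rw [b, Finset.mul_sum]
    refine Finset.sum_congr rfl fun u hu => ?_
    rw [mem_H] at hu; rw [hu]; simp
  have e2 : ∑ u ∈ (BX N).filter (fun u => 1 ≤ nm u ∧ nm u ≤ N), ε ((nm u : ℤ)) * wt u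
      = ∑ u ∈ (BX N).filter (fun u => nm u ≤ N), ε ((nm u : ℤ)) * wt u := by
    refine Finset.sum_subset (fun u hu => ?_) (fun u hu hu' => ?_)
    · simp only [Finset.mem_filter] at *; tauto
    · simp only [Finset.mem_filter] at *
      rw [nm_eq_zero, mul_zero]
      by_contra hc; push Not at hc; tauto
  rw [e1, sum_swap, e2, Finset.sum_filter, BX, Finset.sum_product]
  have inner : ∀ (g : Bool) (x : ℤ), |∑ y ∈ Finset.Icc (-(Nat.sqrt N:ℤ)) (Nat.sqrt N),
      if nm (g,x,y) ≤ N then ε ((nm (g,x,y) : ℤ)) * wt (g,x,y) else 0| ≤ 48 := by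
    intro g x
    rw [← Finset.sum_filter]
    have : ∃ a d, (Finset.Icc (-(Nat.sqrt N:ℤ)) (Nat.sqrt N)).filter (fun y => nm (g,x,y) ≤ N) = Finset.Icc a d := by
      cases g
      · obtain ⟨a, d, h⟩ := filter_interval 6 (N - x^2) (Nat.sqrt N) (by norm_num)
        refine ⟨a, d, ?_⟩
        rw [← h]
        refine Finset.filter_congr fun y _ => ?_
        simp only [nm]; constructor <;> intro <;> linarith
      · obtain ⟨a, d, h⟩ := filter_interval 3 (N - 2*x^2) (Nat.sqrt N) (by norm_num)
        refine ⟨a, d, ?_⟩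
        rw [← h]
        refine Finset.filter_congr fun y _ => ?_
        simp only [nm]; constructor <;> intro <;> linarith
    obtain ⟨a, d, h⟩ := this
    rw [h]
    apply Icc_bound
    · intro y
      rw [abs_mul]
      have h1 := hε ((nm (g,x,y) : ℤ))
      have h2 : |wt (g,x,y)| ≤ 2 := by
        simp only [wt, W]; split_ifs <;> norm_num
      nlinarith [abs_nonneg (wt (g,x,y))]
    · intro y
      have p1 : ((nm (g,x,y+8) : ℤ) : ZMod 8) = ((nm (g,x,y) : ℤ) : ZMod 8) := by
        have : (8:ZMod 8) = 0 := by decide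
        cases g <;> simp only [nm] <;> push_cast <;> rw [this] <;> ring
      have p2 : ((nm (g,x,y+16) : ℤ) : ZMod 8) = ((nm (g,x,y) : ℤ) : ZMod 8) := by
        have : (16:ZMod 8) = 0 := by decide
        cases g <;> simp only [nm] <;> push_cast <;> rw [this] <;> ring
      rw [p1, p2, ← mul_add, ← mul_add]
      have : wt (g,x,y) + wt (g,x,y+8) + wt (g,x,y+16) = 0 := by
        simp only [wt]; push_cast
        generalize (x : ZMod 3) = a
        generalize (y : ZMod 3) = c
        revert a c; decide
      rw [this, mul_zero]
  refine (Finset.abs_sum_le_sum_abs _ _).trans ?_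
  have : ∀ g ∈ (Finset.univ : Finset Bool), |∑ q ∈ Finset.Icc (-(Nat.sqrt N:ℤ)) (Nat.sqrt N) ×ˢ Finset.Icc (-(Nat.sqrt N:ℤ)) (Nat.sqrt N),
      if nm (g, q) ≤ N then ε ((nm (g, q) : ℤ)) * wt (g, q) else 0| ≤ (2*(Nat.sqrt N:ℤ)+1)*48 := by
    intro g _
    rw [Finset.sum_product]
    refine (Finset.abs_sum_le_sum_abs _ _).trans ((Finset.sum_le_sum fun x _ => inner g x).trans ?_)
    rw [Finset.sum_const, Int.card_Icc, nsmul_eq_mul, Int.toNat_of_nonneg (by omega)]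
    apply le_of_eq; ring
  refine (Finset.sum_le_sum this).trans ?_
  simp

lemma abs_partial (N : ℕ) : ∑ n ∈ Finset.Icc 1 N, |b n| ≤ 2*(2*(2*(Nat.sqrt N:ℤ)+1)^2) := by
  have h2 : ∀ u, |wt u| ≤ 2 := by
    intro u; simp only [wt, W]; split_ifs <;> norm_num
  calc ∑ n ∈ Finset.Icc 1 N, |b n| ≤ ∑ n ∈ Finset.Icc 1 N, ∑ u ∈ H n, 2 := by
        refine Finset.sum_le_sum fun n _ => (Finset.abs_sum_le_sum_abs _ _).trans (Finset.sum_le_sum fun u _ => h2 u)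
    _ = _ := sum_swap N (fun _ => 2)
    _ ≤ ∑ u ∈ BX N, 2 := Finset.sum_le_sum_of_subset_of_nonneg (Finset.filter_subset _ _) (by intros; norm_num)
    _ = _ := by
      rw [Finset.sum_const, BX, Finset.card_product, Finset.card_product, Int.card_Icc, nsmul_eq_mul]
      push_cast
      rw [Int.toNat_of_nonneg (by omega)]
      simp; ring

lemma sqrt_le_rpow (N : ℕ) : (Nat.sqrt N : ℝ) ≤ (N:ℝ)^(1/2:ℝ) := by
  rw [← Real.sqrt_eq_rpow]; exact Real.nat_sqrt_le_real_sqrt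

lemma A_partial {ε} (h : Sg ε) (N : ℕ) : |∑ n ∈ Finset.Icc 1 N, A ε n| ≤ 72 * (N:ℝ)^(1/2:ℝ) := by
  rcases Nat.eq_zero_or_pos N with rfl | hN
  · simp
  have h1 := partial_int ε h.bd N
  have h1' : |∑ n ∈ Finset.Icc 1 N, (ε n : ℝ) * b n| ≤ 2*((2*(Nat.sqrt N:ℝ)+1)*48) := by exact_mod_cast h1
  have e : ∑ n ∈ Finset.Icc 1 N, A ε n = (∑ n ∈ Finset.Icc 1 N, (ε n : ℝ) * b n) / 4 := by
    rw [Finset.sum_div]; rfl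
  rw [e, abs_div, abs_of_pos (by norm_num : (0:ℝ) < 4), div_le_iff₀ (by norm_num)]
  have h2 := sqrt_le_rpow N
  have h3 : (1:ℝ) ≤ (N:ℝ)^(1/2:ℝ) := Real.one_le_rpow (by exact_mod_cast hN) (by norm_num)
  linarith

lemma A_abs_partial {ε} (h : Sg ε) (N : ℕ) : ∑ n ∈ Finset.Icc 1 N, |A ε n| ≤ 9 * (N:ℝ) := by
  rcases Nat.eq_zero_or_pos N with rfl | hN
  · simp
  have h1 := abs_partial N
  have h1' : ∑ n ∈ Finset.Icc 1 N, |(b n : ℝ)| ≤ 2*(2*(2*(Nat.sqrt N:ℝ)+1)^2) := by exact_mod_cast h1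
  have h2 : (Nat.sqrt N : ℝ) * Nat.sqrt N ≤ N := by exact_mod_cast Nat.sqrt_le N
  have h3 : (1:ℝ) ≤ Nat.sqrt N := by exact_mod_cast Nat.sqrt_pos.2 hN
  calc ∑ n ∈ Finset.Icc 1 N, |A ε n| ≤ ∑ n ∈ Finset.Icc 1 N, |(b n : ℝ)| / 4 := by
        refine Finset.sum_le_sum fun n _ => ?_
        have : |(ε n : ℝ)| ≤ 1 := by exact_mod_cast h.bd n
        rw [A, abs_div, abs_mul, abs_of_pos (by norm_num : (0:ℝ) < 4)]
        have := mul_le_mul_of_nonneg_right this (abs_nonneg (b n : ℝ))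
        linarith
    _ = (∑ n ∈ Finset.Icc 1 N, |(b n : ℝ)|) / 4 := by rw [Finset.sum_div]
    _ ≤ _ := by nlinarith

lemma A_summable {ε} (h : Sg ε) (s : ℝ) (hs : 1 < s) : Summable (fun n : ℕ => |A ε n| * (n:ℝ)^(-s)) := by
  have := LSeriesSummable_of_sum_norm_bigO (f := fun n => (A ε n : ℂ)) (r := 1) (s := (s:ℂ)) ?_ (by norm_num) (by simpa using hs)
  · have h2 := this.norm
    refine h2.congr fun n => ?_
    rw [LSeries.norm_term_eq]
    split_ifs with h0
    · subst h0; simp [A_zero h]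
    · simp [Real.rpow_neg, div_eq_mul_inv]
  · refine Asymptotics.IsBigO.of_bound 9 (Eventually.of_forall fun N => ?_)
    have h1 := A_abs_partial h N
    simp only [Complex.norm_real, Real.norm_eq_abs, Real.rpow_one]
    rw [abs_of_nonneg (Finset.sum_nonneg fun _ _ => abs_nonneg _), abs_of_nonneg (Nat.cast_nonneg _)]
    exact h1

lemma sq_iff {p : ℕ} (hp : p.Prime) (h5 : 5 ≤ p) :
    IsSquare (-6 : ZMod p) ↔ p % 24 = 1 ∨ p % 24 = 5 ∨ p % 24 = 7 ∨ p % 24 = 11 := by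
  have : Fact p.Prime := ⟨hp⟩
  obtain ⟨n2, n3, n6⟩ := p_not_dvd_small hp h5
  have h2 : p % 2 = 1 := by
    rcases hp.eq_two_or_odd with h | h
    · omega
    · exact h
  have h3 : p % 3 ≠ 0 := fun h => by
    have := (Nat.prime_dvd_prime_iff_eq Nat.prime_three hp).1 (Nat.dvd_of_mod_eq_zero h); omega
  have h0 : (((-6 : ℤ)) : ZMod p) ≠ 0 := by
    rw [Ne, ZMod.intCast_zmod_eq_zero_iff_dvd, Int.dvd_neg]; exact n6
  have e1 := legendreSym.eq_one_iff p h0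
  have e2 : jacobiSym (-6) p = jacobiSym (-6) (p % 24) := jacobiSym.mod_right (-6) (Nat.odd_iff.2 h2)
  rw [jacobiSym.legendreSym.to_jacobiSym, e2] at e1
  push_cast at e1
  rw [← e1]
  have hlt : p % 24 < 24 := Nat.mod_lt _ (by norm_num)
  have h2' : (p % 24) % 2 = 1 := by omega
  have h3' : (p % 24) % 3 ≠ 0 := by omega
  generalize p % 24 = r at *
  interval_cases r <;> first | omega | norm_num

lemma b_prime {p : ℕ} (hp : p.Prime) (h5 : 5 ≤ p) {z : U} (hz : nm z = p) : b p = 4 * wt z := by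
  have := hecke_split hp h5 hz 1
  rw [if_neg (hp.one_lt.ne' ∘ Nat.dvd_one.1), b_one, mul_one] at this
  linarith

lemma b_inert {p : ℕ} (hp : p.Prime) (h5 : 5 ≤ p)
    (h : ¬ (p % 24 = 1 ∨ p % 24 = 5 ∨ p % 24 = 7 ∨ p % 24 = 11)) : b p = 0 := by
  rw [← sq_iff hp h5] at h
  refine Finset.sum_eq_zero fun u hu => ?_
  rw [mem_H] at hu
  exact absurd (sq_of_norm hp h5 (by rw [hu]) (not_pd_of_norm hp hu)) h

lemma wt_two {p : ℕ} (hp : p.Prime) (h5 : 5 ≤ p) {z : U} (hz : nm z = p) :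
    ¬ (3:ℤ) ∣ z.2.1 := by
  intro h'
  have : (3:ℤ) ∣ p := by
    rw [← hz]
    obtain ⟨_ | _, x, y⟩ := z <;> simp only [nm] at h' ⊢ <;> obtain ⟨c, rfl⟩ := h'
    · exact ⟨3*c^2+2*y^2, by ring⟩
    · exact ⟨6*c^2+y^2, by ring⟩
  have : 3 ∣ p := by exact_mod_cast this
  have := (Nat.prime_dvd_prime_iff_eq Nat.prime_three hp).1 this
  omega

lemma wt_cases {p : ℕ} (hp : p.Prime) (h5 : 5 ≤ p) {z : U} (hz : nm z = p) :
    wt z = if (3:ℤ) ∣ z.2.2 then 2 else -1 := by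
  have hx := wt_two hp h5 hz
  have hx' : (z.2.1 : ZMod 3) ≠ 0 := fun h => hx ((ZMod.intCast_zmod_eq_zero_iff_dvd _ 3).1 h)
  simp only [wt, W, if_neg hx']
  simp only [ZMod.intCast_zmod_eq_zero_iff_dvd]
  rfl

lemma Q_norm {p : ℕ} (hQ : p ∈ QSet) : ∃ z : U, nm z = p ∧ (3:ℤ) ∣ z.2.2 := by
  obtain ⟨-, ho, j, hj, x, y, he, -⟩ := hQ
  have ev : ∀ a : ℤ, (2:ℤ) ∣ a^2 → (2:ℤ) ∣ a := fun a h => Int.prime_two.dvd_of_dvd_pow h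
  simp only [Set.mem_insert_iff, Set.mem_singleton_iff] at hj
  rcases hj with rfl | rfl | rfl
  · exact ⟨(true, 2*x, 3*y), by simp only [nm]; linarith, dvd_mul_right _ _⟩
  · obtain ⟨y, rfl⟩ := ev y (by omega)
    exact ⟨(true, x, 3*y), by simp only [nm]; linarith, dvd_mul_right _ _⟩
  · obtain ⟨y, rfl⟩ := ev y (by omega)
    obtain ⟨y, rfl⟩ := ev y (by ring_nf at he; omega)
    exact ⟨(false, x, 3*y), by simp only [nm]; linarith, dvd_mul_right _ _⟩


lemma norm_Q {p : ℕ} (hp : p.Prime) (h5 : 5 ≤ p) {z : U} (hz : nm z = p) (h3 : (3:ℤ) ∣ z.2.2) : p ∈ QSet := by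
  have hodd : Odd p := by
    rcases hp.eq_two_or_odd' with h | h
    · omega
    · exact h
  have hcop : IsCoprime z.2.1 z.2.2 := by
    rw [Int.isCoprime_iff_gcd_eq_one]
    by_contra hg
    obtain ⟨q, hq, hqd⟩ := Nat.exists_prime_and_dvd hg
    have hpd : pd q z := ⟨(Int.natCast_dvd_natCast.2 hqd).trans (Int.gcd_dvd_left ..),
      (Int.natCast_dvd_natCast.2 hqd).trans (Int.gcd_dvd_right ..)⟩
    have e := congrArg nm (sc_dv hpd)
    rw [nm_sc, hz] at e
    have hd : (q:ℤ) ∣ p := ⟨q * nm (dv q z), by rw [← e]; ring⟩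
    have hd' : q ∣ p := by exact_mod_cast hd
    have : q = p := (Nat.prime_dvd_prime_iff_eq hq hp).1 hd'
    subst this
    exact not_pd_of_norm hp hz hpd
  refine ⟨hp, hodd, ?_⟩
  obtain ⟨m, hm⟩ := hodd
  obtain ⟨_ | _, x, y⟩ := z <;> simp only [nm] at hz h3 hcop <;> obtain ⟨y, rfl⟩ := h3
  · have hc := hcop.of_mul_right_right
    have hxo : ¬ (2:ℤ) ∣ x := by
      rintro ⟨c, rfl⟩
      rw [hm] at hz; push_cast at hz; ring_nf at hz; omega
    have h2 : IsCoprime x 2 := ((Int.prime_two.coprime_iff_not_dvd).2 hxo).symm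
    refine ⟨8, by simp, x, 2*(2*y), by linarith, ?_⟩
    rw [← Int.isCoprime_iff_gcd_eq_one]
    exact h2.mul_right (h2.mul_right hc)
  · have hc := hcop.of_mul_right_right
    by_cases hx : (2:ℤ) ∣ x
    · obtain ⟨c, rfl⟩ := hx
      refine ⟨1, by simp, c, y, by linarith, ?_⟩
      rw [← Int.isCoprime_iff_gcd_eq_one]
      exact hc.of_mul_left_right
    · have h2 : IsCoprime x 2 := ((Int.prime_two.coprime_iff_not_dvd).2 hx).symm
      refine ⟨4, by simp, x, 2*y, by linarith, ?_⟩
      rw [← Int.isCoprime_iff_gcd_eq_one]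
      exact h2.mul_right hc

open Classical in
lemma b_coef {p : ℕ} (hp : p.Prime) (h : p % 24 = 1 ∨ p % 24 = 5 ∨ p % 24 = 7 ∨ p % 24 = 11) :
    b p = 4 * (3 * (if p ∈ QSet then 1 else 0) - 1) := by
  have h5 : 5 ≤ p := by
    by_contra hc
    rcases prime_lt_five hp (by omega) with rfl | rfl <;> omega
  obtain ⟨z, hz⟩ := thue hp h5 ((sq_iff hp h5).2 h)
  split_ifs with hq
  · obtain ⟨w, hw, h3⟩ := Q_norm hq
    rw [b_prime hp h5 hw, wt_cases hp h5 hw, if_pos h3]; norm_num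
  · rw [b_prime hp h5 hz, wt_cases hp h5 hz, if_neg fun h3 => hq (norm_Q hp h5 hz h3)]; norm_num

lemma Ps_summable_primes {a : ℕ → ℝ} {C : ℝ} (ha : ∀ p : Nat.Primes, |a p| ≤ C) {s : ℝ} (hs : 1 < s) :
    Summable (fun p : Nat.Primes => a p * ((p : ℕ) : ℝ) ^ (-s)) := by
  refine Summable.of_norm_bounded ((primes_sum hs).mul_left C) fun p => ?_
  rw [norm_mul, Real.norm_eq_abs, Real.norm_eq_abs,
    abs_of_nonneg (Real.rpow_nonneg (Nat.cast_nonneg _) _)]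
  exact mul_le_mul_of_nonneg_right (ha p) (Real.rpow_nonneg (Nat.cast_nonneg _) _)

def eps (i : Fin 4) (x : ZMod 8) : ℤ :=
  if x = 1 then 1 else if x = 3 then ![1,-1,-1,1] i else if x = 5 then ![1,1,-1,-1] i
  else if x = 7 then ![1,-1,1,-1] i else 0

lemma eps_Sg (i : Fin 4) : Sg (eps i) where
  one := by revert i; decide
  mul := by revert i; decide
  bd := by revert i; decide
  ev := by
    rintro x ⟨c, rfl⟩
    revert i c; decide

lemma eps_orth : ∀ (k x : ZMod 8), (k = 1 ∨ k = 3 ∨ k = 5 ∨ k = 7) →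
    ∑ i, eps i k * eps i x = if x = k then 4 else 0 := by decide

/-- the prime sums attached to the twists -/
noncomputable def fe (i : Fin 4) (s : ℝ) : ℝ := Ps (A (eps i)) s

lemma log_lim : Tendsto (fun s : ℝ => Real.log (s - 1)) (𝓝[>] (1:ℝ)) atBot := by
  refine Real.tendsto_log_nhdsGT_zero.comp ?_
  refine tendsto_nhdsWithin_iff.2 ⟨?_, ?_⟩
  · have : Tendsto (fun s : ℝ => s - 1) (𝓝 1) (𝓝 (1 - 1)) := (continuous_id.sub continuous_const).tendsto 1
    rw [sub_self] at this
    exact this.mono_left nhdsWithin_le_nhds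
  · filter_upwards [self_mem_nhdsWithin] with s hs
    exact sub_pos.2 (Set.mem_Ioi.1 hs)

lemma ev_le_two : ∀ᶠ s : ℝ in 𝓝[>] (1:ℝ), 1 < s ∧ s ≤ 2 := by
  filter_upwards [Ioo_mem_nhdsGT (show (1:ℝ) < 2 by norm_num)] with s hs
  exact ⟨hs.1, hs.2.le⟩

lemma fe_dich (i : Fin 4) : Bd (fe i) ∨ ∃ C : ℝ, ∀ s, 1 < s → s ≤ 2 → fe i s ≤ Real.log (s-1) + C := by
  obtain ⟨K, hK⟩ := euler_log
  have hi := eps_Sg i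
  have h1 := fun s hs => hK (A (eps i)) (A_zero hi) (A_one hi) (A_mul hi) (fun p k hp => A_bd hi p k hp)
    (A_small hi) s hs (A_summable hi s hs)
  obtain ⟨l, K', h2⟩ := lip (A (eps i)) 72 (A_zero hi) (A_partial hi) (A_summable hi)
  have hsub : Tendsto (fun s : ℝ => K' * (s - 1)) (𝓝[>] (1:ℝ)) (𝓝 0) := by
    have : Tendsto (fun s : ℝ => K' * (s - 1)) (𝓝 1) (𝓝 (K' * (1 - 1))) :=
      (continuous_const.mul (continuous_id.sub continuous_const)).tendsto 1
    rw [sub_self, mul_zero] at this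
    exact this.mono_left nhdsWithin_le_nhds
  have hlim : Tendsto (Ls (A (eps i))) (𝓝[>] (1:ℝ)) (𝓝 l) := by
    rw [tendsto_iff_norm_sub_tendsto_zero]
    refine squeeze_zero' (Eventually.of_forall fun _ => norm_nonneg _) ?_ hsub
    filter_upwards [ev_le_two] with s hs
    exact h2 s hs.1 hs.2
  by_cases hl : l = 0
  · right
    subst hl
    refine ⟨Real.log K' + K, fun s hs hs2 => ?_⟩
    obtain ⟨hpos, habs⟩ := h1 s hs
    have h3 := h2 s hs hs2
    rw [sub_zero, abs_of_pos hpos] at h3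
    have hs1 : 0 < s - 1 := by linarith
    have hK' : 0 < K' := pos_of_mul_pos_left (hpos.trans_le h3) hs1.le
    have h4 := Real.log_le_log hpos h3
    rw [Real.log_mul hK'.ne' hs1.ne'] at h4
    have := (abs_le.1 habs).1
    change Ps _ s ≤ _
    linarith
  · left
    have h3 : Bd (fun s => Real.log (Ls (A (eps i)) s)) := Bd.of_tendsto (hlim.log hl)
    have h4 : Bd (fun s => Real.log (Ls (A (eps i)) s) - Ps (A (eps i)) s) :=
      Bd.of_le K fun s hs => (h1 s hs).2
    exact (h3.sub h4).congr fun s _ => by simp [fe]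

open Classical in
noncomputable def Qk (k : ℕ) (s : ℝ) : ℝ := Ps (fun n => if n ∈ QSetMod k then 1 else 0) s

lemma Qk_nonneg (k : ℕ) (s : ℝ) : 0 ≤ Qk k s := by
  refine tsum_nonneg fun p => mul_nonneg ?_ (Real.rpow_nonneg (Nat.cast_nonneg _) _)
  dsimp only
  split_ifs <;> norm_num

lemma main_coef (k p : ℕ) (hk : k = 1 ∨ k = 5 ∨ k = 7 ∨ k = 11) (hp : p.Prime) :
    ∑ i, (eps i k : ℝ) * A (eps i) p = if p % 24 = k then (b p : ℝ) else 0 := by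
  by_cases h5 : 5 ≤ p
  · have h8 : ((k:ZMod 8) = 1 ∨ (k:ZMod 8) = 3 ∨ (k:ZMod 8) = 5 ∨ (k:ZMod 8) = 7) := by
      rcases hk with rfl | rfl | rfl | rfl <;> decide
    have e := eps_orth k p h8
    have e' : ∑ i, (eps i k : ℝ) * eps i p = if (p : ZMod 8) = k then 4 else 0 := by
      exact_mod_cast e
    have e2 : ∑ i, (eps i k : ℝ) * A (eps i) p = (∑ i, (eps i k : ℝ) * eps i p) * (b p / 4) := by
      rw [Finset.sum_mul]
      refine Finset.sum_congr rfl fun i _ => ?_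
      simp only [A]; ring
    rw [e2, e']
    by_cases hr : p % 24 = 1 ∨ p % 24 = 5 ∨ p % 24 = 7 ∨ p % 24 = 11
    · have : ((p : ZMod 8) = k) ↔ p % 24 = k := by
        rw [ZMod.natCast_eq_natCast_iff']
        omega
      simp only [this]
      split_ifs <;> ring
    · rw [b_inert hp h5 hr]; simp
  · have hA : ∀ i, A (eps i) p = 0 := fun i => by
      have := A_small (eps_Sg i) p 1 hp le_rfl (by omega)
      rwa [pow_one] at this
    simp only [hA, mul_zero, Finset.sum_const_zero]
    rw [if_neg]
    rcases prime_lt_five hp (by omega) with rfl | rfl <;> omega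

lemma main_id (k : ℕ) (hk : k = 1 ∨ k = 5 ∨ k = 7 ∨ k = 11) (s : ℝ) (hs : 1 < s) :
    ∑ i, (eps i k : ℝ) * fe i s = 12 * Qk k s - 4 * Sk k s := by
  classical
  have hA : ∀ i, Summable (fun p : Nat.Primes => A (eps i) p * ((p : ℕ) : ℝ) ^ (-s)) := fun i =>
    Ps_summable_primes (C := 2) (fun p => by
      have := A_bd (eps_Sg i) p 1 p.2
      rwa [pow_one, pow_one] at this) hs
  have hQ : Summable (fun p : Nat.Primes => (if (p:ℕ) ∈ QSetMod k then (1:ℝ) else 0) * ((p : ℕ) : ℝ) ^ (-s)) :=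
    Ps_summable_primes (a := fun n => if n ∈ QSetMod k then (1:ℝ) else 0) (C := 1)
      (fun p => by split_ifs <;> simp) hs
  have hS : Summable (fun p : Nat.Primes => (if (p:ℕ) % 24 = k then (1:ℝ) else 0) * ((p : ℕ) : ℝ) ^ (-s)) :=
    Ps_summable_primes (a := fun n => if n % 24 = k then (1:ℝ) else 0) (C := 1)
      (fun p => by split_ifs <;> simp) hs
  simp only [fe, Qk, Sk, Ps, ← tsum_mul_left]
  rw [← Summable.tsum_finsetSum (fun i _ => (hA i).mul_left _), ← (hQ.mul_left 12).tsum_sub (hS.mul_left 4)]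
  refine tsum_congr fun p => ?_
  have h1 := main_coef k p hk p.2
  simp only [← mul_assoc, ← Finset.sum_mul]
  rw [h1, ← sub_mul]
  congr 1
  by_cases hpk : (p:ℕ) % 24 = k
  · have h2 := b_coef (p := p) p.2 (by rw [hpk]; exact hk)
    have h3 : (b p : ℝ) = 4 * (3 * (if (p:ℕ) ∈ QSet then 1 else 0) - 1) := by rw [h2]; push_cast; rfl
    have h4 : (p:ℕ) ∈ QSetMod k ↔ (p:ℕ) ∈ QSet := ⟨fun h => h.1, fun h => ⟨h, hpk⟩⟩
    simp only [h4, if_pos hpk, h3]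
    split_ifs <;> norm_num
  · have h4 : (p:ℕ) ∉ QSetMod k := fun h => hpk h.2
    simp [h4, hpk]

lemma Bd.ev {f : ℝ → ℝ} (h : Bd f) : ∃ C : ℝ, ∀ᶠ s in 𝓝[>] (1:ℝ), |f s| ≤ C := by
  obtain ⟨C, hC⟩ := Asymptotics.IsBigO.bound h
  exact ⟨C, hC.mono fun s hs => by simpa using hs⟩

lemma fe_upper (i : Fin 4) : ∃ C : ℝ, ∀ᶠ s in 𝓝[>] (1:ℝ), fe i s ≤ C := by
  rcases fe_dich i with h | ⟨C, h⟩
  · obtain ⟨C, hC⟩ := h.ev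
    exact ⟨C, hC.mono fun s hs => (le_abs_self _).trans hs⟩
  · refine ⟨C, ?_⟩
    filter_upwards [ev_le_two] with s hs
    have := h s hs.1 hs.2
    have : Real.log (s-1) ≤ 0 := Real.log_nonpos (by linarith [hs.1]) (by linarith [hs.2])
    linarith

lemma fe_Bd (i : Fin 4) : Bd (fe i) := by
  rcases fe_dich i with h | ⟨C, h⟩
  · exact h
  exfalso
  choose D hD using fe_upper
  obtain ⟨E, hE⟩ := (Sk_asymp 1 (by norm_num) (by simp)).ev
  have hlog := log_lim.eventually (eventually_lt_atBot (-2 * (C + (∑ j ∈ Finset.univ.erase i, D j) + 4 * E)))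
  have hall : ∀ᶠ s in 𝓝[>] (1:ℝ), ∀ j, fe j s ≤ D j := eventually_all.2 hD
  obtain ⟨s, hs, hE, hall, hlog⟩ := (ev_le_two.and (hE.and (hall.and hlog))).exists
  have h1 := main_id 1 (by simp) s hs.1
  have h2 : ∀ j, eps j ((1:ℕ) : ZMod 8) = 1 := by decide
  simp only [h2, Int.cast_one, one_mul] at h1
  rw [← Finset.add_sum_erase _ _ (Finset.mem_univ i)] at h1
  have h3 : ∑ j ∈ Finset.univ.erase i, fe j s ≤ ∑ j ∈ Finset.univ.erase i, D j :=
    Finset.sum_le_sum fun j _ => hall j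
  have h4 := Qk_nonneg 1 s
  have h5 := h s hs.1 hs.2
  have h6 := (abs_le.1 hE).2
  linarith

lemma Qk_asymp (k : ℕ) (hk : k = 1 ∨ k = 5 ∨ k = 7 ∨ k = 11) :
    Bd (fun s => Qk k s + 1/24 * Real.log (s-1)) := by
  have h1 : Bd (fun s => ∑ i, (eps i k : ℝ) * fe i s) := Bd.sum _ fun i _ => (fe_Bd i).cmul _
  have h2 := Sk_asymp k (by omega) (by rcases hk with rfl | rfl | rfl | rfl <;> decide)
  refine ((h1.cmul (1/12)).add (h2.cmul (1/3))).congr fun s hs => ?_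
  rw [main_id k hk s hs]; ring

lemma Qk_eq (k : ℕ) (s : ℝ) : ∑' p : QSetMod k, ((p : ℕ) : ℝ) ^ (-s) = Qk k s := by
  classical
  have hsub : QSetMod k ⊆ {p | p.Prime} := fun p hp => hp.1.1
  rw [tsum_subtype (QSetMod k) (fun p : ℕ => (p:ℝ)^(-s))]
  have : Qk k s = ∑' p : {p : ℕ | p.Prime}, (QSetMod k).indicator (fun p : ℕ => (p:ℝ)^(-s)) p := by
    refine tsum_congr fun p => ?_
    simp [Set.indicator_apply]
  rw [this, tsum_subtype {p : ℕ | p.Prime} ((QSetMod k).indicator (fun p : ℕ => (p:ℝ)^(-s))),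
    Set.indicator_indicator, Set.inter_eq_right.2 hsub]

theorem stmt_18 (k : ℕ) (hk : k ∈ ({1, 5, 7, 11} : Set ℕ)) :
    Tendsto
      (fun s : ℝ =>
        (∑' p : QSetMod k, ((p : ℕ) : ℝ) ^ (-s)) /
          (∑' p : {q : ℕ // q.Prime}, ((p : ℕ) : ℝ) ^ (-s)))
      (𝓝[>] (1 : ℝ)) (𝓝 (1 / 24)) ∧ (QSetMod k).Infinite := by
  have hk' : k = 1 ∨ k = 5 ∨ k = 7 ∨ k = 11 := by simpa using hk
  have hQ := Qk_asymp k hk'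
  have hneg : Tendsto (fun s : ℝ => -Real.log (s - 1)) (𝓝[>] (1:ℝ)) atTop :=
    tendsto_neg_atBot_atTop.comp log_lim
  constructor
  · simp only [Qk_eq]
    set P : ℝ → ℝ := fun s => ∑' p : {q : ℕ // q.Prime}, ((p : ℕ) : ℝ) ^ (-s) with hP
    have hPb : Bd (fun s => P s + Real.log (s-1)) := P_asymp
    have hPt : Tendsto P (𝓝[>] (1:ℝ)) atTop := by
      obtain ⟨C, hC⟩ := hPb.ev
      refine tendsto_atTop_mono' _ ?_ (tendsto_atTop_add_const_right _ (-C) hneg)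
      filter_upwards [hC] with s hs
      have := (abs_le.1 hs).1
      linarith
    have hD : Bd (fun s => Qk k s - 1/24 * P s) :=
      (hQ.sub (hPb.cmul (1/24))).congr fun s _ => by ring
    have hz : Tendsto (fun s => (Qk k s - 1/24 * P s) / P s) (𝓝[>] (1:ℝ)) (𝓝 0) := by
      obtain ⟨C, hC⟩ := hD.ev
      have hC' : Tendsto (fun s => C / P s) (𝓝[>] (1:ℝ)) (𝓝 0) := hPt.const_div_atTop C
      rw [tendsto_zero_iff_norm_tendsto_zero]
      refine squeeze_zero' (Eventually.of_forall fun _ => norm_nonneg _) ?_ hC'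
      filter_upwards [hC, hPt.eventually_gt_atTop 0] with s h1 h2
      rw [norm_div, Real.norm_eq_abs, Real.norm_eq_abs, abs_of_pos h2]
      gcongr
    have := hz.add_const (1/24)
    rw [zero_add] at this
    refine this.congr' ?_
    filter_upwards [hPt.eventually_gt_atTop 0] with s h2
    change _ = Qk k s / P s
    field_simp
    ring
  · intro hfin
    obtain ⟨C, hC⟩ := hQ.ev
    have := hfin.fintype
    obtain ⟨s, hs, hC, hl⟩ := (ev_le_two.and (hC.and (hneg.eventually_gt_atTop
      (24 * (Fintype.card (QSetMod k) + C))))).exists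
    rw [← Qk_eq, tsum_fintype] at hC
    have hb : ∑ p : QSetMod k, ((p : ℕ) : ℝ) ^ (-s) ≤ ∑ p : QSetMod k, (1:ℝ) := by
      refine Finset.sum_le_sum fun p _ => ?_
      refine Real.rpow_le_one_of_one_le_of_nonpos ?_ (by linarith [hs.1])
      exact_mod_cast p.2.1.1.one_lt.le
    simp only [Finset.sum_const, Finset.card_univ, nsmul_eq_mul, mul_one] at hb
    have := (abs_le.1 hC).1
    linarith
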